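/- Let θ be a proper, primitive, aperiodic substitution on a finite alphabet A, let (X^θ, T) be the associated substitution subshift (a minimal Cantor system), and let S be a bounded speedup of T which is minimal. Then (X^θ, S) is topologically conjugate to a substitution subshift: there exist a finite alphabet B, a proper, primitive, aperiodic substitution τ : B → B*, and a homeomorphism ψ : X^θ → X^τ such that ψ∘S = T_τ∘ψ, where T_τ denotes the left shift on X^τ. -/

import Mathlib

/-- The left shift on bi-infinite sequences. -/
def shiftMap {A : Type*} : (ℤ → A) → (ℤ → A) := fun x k => x (k + 1)

/-- The `k`-th iterate of the substitution `θ` applied to the letter `a`. -/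
def substIter {A : Type*} (θ : A → List A) (k : ℕ) (a : A) : List A :=
  (fun w : List A => w.flatMap θ)^[k] [a]

/-- A substitution is primitive if every letter eventually appears in every iterate, and all
iterate lengths tend to infinity. -/
def SubstPrimitive {A : Type*} (θ : A → List A) : Prop :=
  (∀ a b : A, ∃ k : ℕ, b ∈ substIter θ k a) ∧
  ∀ a : A, Filter.Tendsto (fun k => (substIter θ k a).length) Filter.atTop Filter.atTop

/-- A substitution is proper if for some `k`, all the words `θ^k(a)` begin with a common
letter `l` and end with a common letter `r`. -/
def SubstProper {A : Type*} (θ : A → List A) : Prop :=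
  ∃ (l r : A) (k : ℕ), ∀ a : A,
    (substIter θ k a).head? = some l ∧ (substIter θ k a).getLast? = some r

/-- The substitution subshift: bi-infinite sequences all of whose finite subwords appear as
subwords of some `θ^k(a)`. -/
def substShift {A : Type*} (θ : A → List A) : Set (ℤ → A) :=
  {x | ∀ (i : ℤ) (n : ℕ), ∃ (k : ℕ) (a : A),
    (List.ofFn fun t : Fin n => x (i + (t : ℕ))) <:+: substIter θ k a}

/-- A substitution is aperiodic if its subshift contains no shift-periodic points. -/
def SubstAperiodic {A : Type*} (θ : A → List A) : Prop :=
  ∀ x ∈ substShift θ, ∀ n : ℕ, 0 < n → shiftMap^[n] x ≠ x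

open Filter Topology

/-- The word of length `n` read in `x` from position `i` on. -/
def window {A : Type*} (x : ℤ → A) (i : ℤ) (n : ℕ) : List A :=
  List.ofFn fun t : Fin n => x (i + (t : ℕ))

section Window

variable {A : Type*}

@[simp] lemma length_window (x : ℤ → A) (i : ℤ) (n : ℕ) : (window x i n).length = n := by
  simp [window]

lemma window_eq_iff {x y : ℤ → A} {i j : ℤ} {n : ℕ} :
    window x i n = window y j n ↔ ∀ t : ℕ, t < n → x (i + t) = y (j + t) := by
  unfold window
  rw [List.ofFn_inj, funext_iff]
  exact ⟨fun h t ht => h ⟨t, ht⟩, fun h t => h t t.2⟩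

lemma window_add (x : ℤ → A) (i : ℤ) (m n : ℕ) :
    window x i (m + n) = window x i m ++ window x (i + m) n := by
  apply List.ext_getElem
  · simp
  · intro k h1 h2
    simp only [window, List.getElem_ofFn, List.getElem_append, List.length_ofFn]
    split_ifs with h
    · rfl
    · congr 1
      omega

@[simp] lemma window_zero (x : ℤ → A) (i : ℤ) : window x i 0 = [] := by simp [window]

@[simp] lemma window_one (x : ℤ → A) (i : ℤ) : window x i 1 = [x i] := by simp [window]

lemma window_comp_add (x : ℤ → A) (k i : ℤ) (n : ℕ) :
    window (fun j => x (j + k)) i n = window x (i + k) n := by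
  rw [window_eq_iff]
  intro t _
  congr 1
  ring

lemma window_infix (x : ℤ → A) (i : ℤ) (a b n : ℕ) (h : a + b ≤ n) :
    window x (i + a) b <:+: window x i n := by
  obtain ⟨c, rfl⟩ := Nat.exists_eq_add_of_le h
  rw [window_add, window_add]
  exact ⟨_, _, rfl⟩

lemma exists_eq_window_of_infix {x : ℤ → A} {i : ℤ} {n : ℕ} {w : List A}
    (h : w <:+: window x i n) :
    ∃ a : ℕ, a + w.length ≤ n ∧ w = window x (i + a) w.length := by
  obtain ⟨s, t, e⟩ := h
  have hl := congrArg List.length e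
  simp only [List.length_append, length_window] at hl
  refine ⟨s.length, by omega, ?_⟩
  rw [← hl, window_add, window_add] at e
  obtain ⟨e1, -⟩ := List.append_inj e (by simp)
  exact (List.append_inj e1 (by simp)).2

end Window

lemma continuous_perm_zpow {Y : Type*} [TopologicalSpace Y] (S : Equiv.Perm Y)
    (hS : Continuous S) (hS' : Continuous S.symm) (n : ℤ) : Continuous fun x => (S ^ n) x := by
  induction n with
  | zero => simpa using continuous_id'
  | succ n ih =>
    simp only [add_comm (n : ℤ) 1, zpow_add, zpow_one, Equiv.Perm.mul_apply]
    exact hS.comp ih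
  | pred n ih =>
    simp only [sub_eq_neg_add, zpow_add, zpow_neg_one, Equiv.Perm.mul_apply]
    exact hS'.comp ih

/-- A continuous coding `c` of a minimal homeomorphism `S` of a compact space, together with a
self-map `F` that reparametrizes orbits as prescribed by the code, presents `S` as a
substitution subshift. -/
theorem exists_substitution_of_coding {Y : Type*} [TopologicalSpace Y] [CompactSpace Y]
    [Nonempty Y] (S : Equiv.Perm Y) (hS : Continuous S) (hS' : Continuous S.symm)
    (hmin : ∀ V : Set Y, IsOpen V → V.Nonempty → ∃ H : ℕ, ∀ x, ∃ n ≤ H, (S ^ n) x ∈ V)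
    (haper : ∀ (x : Y) (n : ℕ), 0 < n → (S ^ n) x ≠ x)
    {N : ℕ} (c : Y → Fin N) (hc : Continuous c) (hsurj : Function.Surjective c)
    (hgen : ∀ x y, (∀ n : ℤ, c ((S ^ n) x) = c ((S ^ n) y)) → x = y)
    (F : Y → Y) (t : Y → ℕ) (ht : ∀ x, 2 ≤ t x) (hF : ∀ x, F (S x) = (S ^ t x) (F x))
    (hct : ∀ x y, c x = c y → t x = t y ∧ ∀ i < t x, c ((S ^ i) (F x)) = c ((S ^ i) (F y)))
    (hall : ∀ x b, ∃ i < t x, c ((S ^ i) (F x)) = b)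
    (hfirst : ∀ x y, c (F x) = c (F y)) (hlast : ∀ x y, c (S.symm (F x)) = c (S.symm (F y))) :
    ∃ τ : Fin N → List (Fin N), (∀ b, τ b ≠ []) ∧
      SubstProper τ ∧ SubstPrimitive τ ∧ SubstAperiodic τ ∧
      ∃ ψ : Y ≃ₜ ↥(substShift τ),
        ∀ x : Y, ((ψ (S x) : ↥(substShift τ)) : ℤ → Fin N) =
            shiftMap ((ψ x : ↥(substShift τ)) : ℤ → Fin N) := by
  classical
  let code : Y → ℤ → Fin N := fun x n => c ((S ^ n) x)
  have code_def : ∀ x n, code x n = c ((S ^ n) x) := fun _ _ => rfl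
  have code_shift : ∀ (x : Y) (n k : ℤ), code ((S ^ k) x) n = code x (n + k) := by
    intro x n k
    simp only [code, zpow_add, Equiv.Perm.mul_apply]
  have hpow : ∀ n : ℕ, Continuous fun x => (S ^ n) x := fun n => by
    simpa using continuous_perm_zpow S hS hS' n
  have hcode : Continuous code := by
    exact continuous_pi fun n => hc.comp (continuous_perm_zpow S hS hS' n)
  have hinj : Function.Injective code := fun x y h => hgen x y fun n => congrFun h n
  let rep := Function.surjInv hsurj
  let τ : Fin N → List (Fin N) := fun b => window (code (F (rep b))) 0 (t (rep b))
  have hτ : ∀ x, τ (c x) = window (code (F x)) 0 (t x) := by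
    intro x
    obtain ⟨h1, h2⟩ := hct (rep (c x)) x (Function.surjInv_eq hsurj _)
    simp only [τ]
    rw [h1, window_eq_iff]
    intro i hi
    simpa [code] using h2 i (h1 ▸ hi)
  have hstep : ∀ n x, ∃ k, 2 * n ≤ k ∧ F ((S ^ n) x) = (S ^ k) (F x) ∧
      (window (code x) 0 n).flatMap τ = window (code (F x)) 0 k := by
    intro n x
    induction n with
    | zero => exact ⟨0, by simp⟩
    | succ n ih =>
      obtain ⟨k, hk, h1, h2⟩ := ih
      refine ⟨k + t ((S ^ n) x), ?_, ?_, ?_⟩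
      · have := ht ((S ^ n) x)
        omega
      · rw [pow_succ', Equiv.Perm.mul_apply, hF, h1, ← Equiv.Perm.mul_apply, ← pow_add, add_comm]
      · rw [window_add, List.flatMap_append, h2, window_add, window_one]
        congr 1
        rw [List.flatMap_singleton, zero_add, zero_add, code_def, zpow_natCast, hτ, h1,
          window_eq_iff]
        intro i _
        rw [← zpow_natCast S k, code_shift]
        congr 1
        ring
  have hiter : ∀ k x, ∃ n, 2 ^ k ≤ n ∧ substIter τ k (c x) = window (code (F^[k] x)) 0 n := by
    intro k x
    induction k with
    | zero => exact ⟨1, by simp [substIter, code]⟩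
    | succ k ih =>
      obtain ⟨n, hn, h⟩ := ih
      obtain ⟨m, hm, -, h2⟩ := hstep n (F^[k] x)
      refine ⟨m, by rw [pow_succ]; omega, ?_⟩
      rw [Function.iterate_succ_apply', ← h2, ← h]
      simp only [substIter, Function.iterate_succ_apply']
  have hne : ∀ b, τ b ≠ [] := by
    intro b h
    have := congrArg List.length h
    have h2 := ht (rep b)
    simp only [τ, length_window, List.length_nil] at this
    omega
  have hrange : substShift τ = Set.range code := by
    apply Set.Subset.antisymm
    · intro y hy
      have hcl : IsClosed (Set.range code) := (isCompact_range hcode).isClosed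
      rw [← hcl.closure_eq]
      have hex : ∀ n : ℕ, ∃ x, ∀ j : ℤ, -n ≤ j → j ≤ n → code x j = y j := by
        intro n
        obtain ⟨k, a, h⟩ := hy (-n) (2 * n + 1)
        obtain ⟨x, rfl⟩ := hsurj a
        obtain ⟨m, -, e⟩ := hiter k x
        rw [e] at h
        obtain ⟨a, -, h⟩ := exists_eq_window_of_infix h
        change window y _ _ = _ at h
        simp only [List.length_ofFn] at h
        rw [window_eq_iff] at h
        refine ⟨(S ^ ((a : ℤ) + n)) (F^[k] x), fun j h1 h2 => ?_⟩
        have := h (j + n).toNat (by omega)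
        rw [code_shift]
        rw [show -(n : ℤ) + ((j + n).toNat : ℤ) = j by omega,
          show 0 + (a : ℤ) + ((j + n).toNat : ℤ) = j + (a + n) by omega] at this
        exact this.symm
      choose x hx using hex
      refine mem_closure_of_tendsto (f := fun n : ℕ => code (x n)) (b := atTop) ?_
        (Eventually.of_forall fun n => Set.mem_range_self _)
      rw [tendsto_pi_nhds]
      intro j
      refine tendsto_const_nhds.congr' ?_
      filter_upwards [eventually_ge_atTop j.natAbs] with n hn
      exact (hx n j (by omega) (by omega)).symm
    · rintro _ ⟨x, rfl⟩ i n
      let V : Set Y := {y | ∀ s : Fin n, c ((S ^ (s : ℕ)) y) = c ((S ^ (s : ℕ)) ((S ^ i) x))}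
      have hV : IsOpen V := by
        simp only [V, Set.ofPred_forall]
        exact isOpen_iInter_of_finite fun s =>
          (isOpen_discrete {c ((S ^ (s : ℕ)) ((S ^ i) x))}).preimage (hc.comp (hpow s))
      obtain ⟨H, hH⟩ := hmin V hV ⟨(S ^ i) x, fun s => rfl⟩
      obtain ⟨m, hm, e⟩ := hiter (H + n) x
      obtain ⟨u, hu, hmem⟩ := hH (F^[H + n] x)
      refine ⟨H + n, c x, ?_⟩
      rw [e]
      have h2 : (List.ofFn fun s : Fin n => code x (i + (s : ℕ))) =
          window (code (F^[H + n] x)) (0 + u) n := by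
        change window _ _ _ = _
        rw [window_eq_iff]
        intro s hs
        have := hmem ⟨s, hs⟩
        simp only [← zpow_natCast, ← code_def, code_shift] at this
        rw [zero_add, add_comm i, add_comm (u : ℤ), this]
      rw [h2]
      apply window_infix
      have := (Nat.lt_two_pow_self (n := H + n))
      omega
  have hmem : ∀ x, code x ∈ substShift τ := fun x => hrange ▸ Set.mem_range_self x
  let e : Y ≃ ↥(substShift τ) := Equiv.ofBijective (fun x => ⟨code x, hmem x⟩)
    ⟨fun x y h => hinj (congrArg Subtype.val h), fun ⟨y, hy⟩ => by
      rw [hrange] at hy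
      obtain ⟨x, rfl⟩ := hy
      exact ⟨x, rfl⟩⟩
  have he : Continuous e := hcode.subtype_mk _
  have hshift : ∀ x, code (S x) = shiftMap (code x) := by
    intro x
    funext n
    have := code_shift x n 1
    simpa [shiftMap] using this
  refine ⟨τ, hne, ?_, ⟨?_, ?_⟩, ?_, he.homeoOfEquivCompactToT2, hshift⟩
  · have x0 : Y := Classical.arbitrary Y
    refine ⟨c (F x0), c (S.symm (F x0)), 1, fun a => ?_⟩
    obtain ⟨x, rfl⟩ := hsurj a
    have e1 : substIter τ 1 (c x) = window (code (F x)) 0 (t x) := by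
      simp [substIter, hτ]
    obtain ⟨s, hs⟩ : ∃ s, t x = s + 1 := ⟨t x - 1, by have := ht x; omega⟩
    rw [e1]
    constructor
    · rw [hs, add_comm, window_add, window_one]
      simp [code, hfirst x x0]
    · rw [hs, window_add, window_one]
      have : (S ^ s) (F x) = S.symm (F (S x)) := by
        rw [hF, hs, pow_succ', Equiv.Perm.mul_apply, Equiv.symm_apply_apply]
      simp [code, this, hlast (S x) x0]
  · intro a b
    obtain ⟨x, rfl⟩ := hsurj a
    obtain ⟨i, hi, h⟩ := hall x b
    refine ⟨1, ?_⟩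
    have e1 : substIter τ 1 (c x) = window (code (F x)) 0 (t x) := by
      simp [substIter, hτ]
    rw [e1, window, List.mem_ofFn]
    exact ⟨⟨i, hi⟩, by simpa [code] using h⟩
  · intro a
    obtain ⟨x, rfl⟩ := hsurj a
    refine tendsto_atTop_mono (f := fun k => k) (fun k => ?_) tendsto_id
    obtain ⟨n, hn, e⟩ := hiter k x
    rw [e, length_window]
    exact (Nat.lt_two_pow_self).le.trans hn
  · intro y hy n hn h
    rw [hrange] at hy
    obtain ⟨x, rfl⟩ := hy
    apply haper x n hn
    apply hinj
    rw [← h]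
    clear h hn
    induction n with
    | zero => simp
    | succ n ih =>
      rw [Function.iterate_succ_apply', ← ih, ← hshift, pow_succ', Equiv.Perm.mul_apply]

section Image

variable {A B : Type*}

/-- The bi-infinite sequence `x` read from position `k` on. -/
def shiftBy (k : ℤ) (x : ℤ → A) : ℤ → A := fun j => x (j + k)

lemma shiftBy_apply (k : ℤ) (x : ℤ → A) (j : ℤ) : shiftBy k x j = x (j + k) := rfl

lemma shiftBy_shiftBy (k l : ℤ) (x : ℤ → A) :
    shiftBy k (shiftBy l x) = shiftBy (k + l) x := by
  funext j
  simp only [shiftBy_apply]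
  congr 1
  ring

@[simp] lemma shiftBy_zero (x : ℤ → A) : shiftBy 0 x = x := by
  funext j
  simp [shiftBy_apply]

/-- The positions at which the blocks `σ (x i)` start in the image of `x` under `σ`. -/
def cutPos (σ : A → List B) (x : ℤ → A) : ℤ → ℤ
  | Int.ofNat n => ∑ t ∈ Finset.range n, ((σ (x t)).length : ℤ)
  | Int.negSucc n => -∑ t ∈ Finset.range (n + 1), ((σ (x (-(t : ℤ) - 1))).length : ℤ)

@[simp] lemma cutPos_zero (σ : A → List B) (x : ℤ → A) : cutPos σ x 0 = 0 := by
  change cutPos σ x (Int.ofNat 0) = 0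
  simp [cutPos]

lemma cutPos_add_one (σ : A → List B) (x : ℤ → A) (i : ℤ) :
    cutPos σ x (i + 1) = cutPos σ x i + (σ (x i)).length := by
  rcases i with n | n
  · change cutPos σ x (Int.ofNat (n + 1)) = _
    simp only [cutPos, Finset.sum_range_succ]
    rfl
  · rcases n with _ | n
    · change cutPos σ x (Int.ofNat 0) = _
      simp [cutPos]
    · change cutPos σ x (Int.negSucc n) = _
      simp only [cutPos]
      rw [Finset.sum_range_succ _ (n + 1),
        show (-((n + 1 : ℕ) : ℤ) - 1) = Int.negSucc (n + 1) by omega]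
      ring

lemma eq_cutPos {σ : A → List B} {x : ℤ → A} {P : ℤ → ℤ} (h0 : P 0 = 0)
    (hs : ∀ i, P (i + 1) = P i + (σ (x i)).length) : P = cutPos σ x := by
  funext i
  induction i with
  | zero => simp [h0]
  | succ n ih => rw [hs, cutPos_add_one, ih]
  | pred n ih =>
    have h1 := hs (-(n : ℤ) - 1)
    have h2 := cutPos_add_one σ x (-(n : ℤ) - 1)
    rw [sub_add_cancel] at h1 h2
    omega

lemma cutPos_shiftBy (σ : A → List B) (x : ℤ → A) (s i : ℤ) :
    cutPos σ (shiftBy s x) i = cutPos σ x (i + s) - cutPos σ x s := by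
  have := eq_cutPos (σ := σ) (x := shiftBy s x)
    (P := fun i => cutPos σ x (i + s) - cutPos σ x s) (by simp) (fun i => by
      rw [show i + 1 + s = i + s + 1 by ring, cutPos_add_one, shiftBy_apply]
      ring)
  exact (congrFun this i).symm

lemma cutPos_add_nat (σ : A → List B) (x : ℤ → A) (i : ℤ) (n : ℕ) :
    cutPos σ x (i + n) = cutPos σ x i + ((window x i n).flatMap σ).length := by
  induction n with
  | zero => simp
  | succ n ih =>
    rw [window_add, List.flatMap_append, List.length_append]
    push_cast
    rw [← add_assoc, cutPos_add_one, ih]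
    simp
    ring

lemma strictMono_cutPos {σ : A → List B} (hσ : ∀ a, σ a ≠ []) (x : ℤ → A) :
    StrictMono (cutPos σ x) := by
  refine strictMono_int_of_lt_succ fun i => ?_
  rw [cutPos_add_one]
  have := List.length_pos_iff.2 (hσ (x i))
  omega

lemma sub_le_cutPos_sub {σ : A → List B} (hσ : ∀ a, σ a ≠ []) (x : ℤ → A) {i j : ℤ}
    (h : i ≤ j) : j - i ≤ cutPos σ x j - cutPos σ x i := by
  induction j, h using Int.leInduction with
  | base => simp
  | succ k _ ih =>
    have := strictMono_cutPos hσ x (lt_add_one k)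
    omega

lemma exists_block {σ : A → List B} (hσ : ∀ a, σ a ≠ []) (x : ℤ → A) (k : ℤ) :
    ∃ i, cutPos σ x i ≤ k ∧ k < cutPos σ x (i + 1) := by
  obtain ⟨i, hi, hmax⟩ := Int.exists_greatest_of_bdd (P := fun i => cutPos σ x i ≤ k)
    ⟨max k 0, fun z hz => by
      by_contra! h
      have := sub_le_cutPos_sub hσ x (i := 0) (j := z) (by omega)
      rw [cutPos_zero] at this
      omega⟩
    ⟨min k 0, by
      have := sub_le_cutPos_sub hσ x (i := min k 0) (j := 0) (by omega)
      rw [cutPos_zero] at this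
      omega⟩
  refine ⟨i, hi, ?_⟩
  by_contra! h
  have := hmax _ h
  omega

lemma block_unique {σ : A → List B} (hσ : ∀ a, σ a ≠ []) {x : ℤ → A} {k i j : ℤ}
    (hi : cutPos σ x i ≤ k) (hi' : k < cutPos σ x (i + 1))
    (hj : cutPos σ x j ≤ k) (hj' : k < cutPos σ x (j + 1)) : i = j := by
  have h1 := (strictMono_cutPos hσ x).lt_iff_lt.1 (hi.trans_lt hj')
  have h2 := (strictMono_cutPos hσ x).lt_iff_lt.1 (hj.trans_lt hi')
  omega

/-- The image of a bi-infinite sequence under a substitution, the block of the letter at the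
origin starting at the origin. -/
noncomputable def substImage [Nonempty B] (σ : A → List B) (x : ℤ → A) : ℤ → B :=
  Classical.epsilon fun y => ∀ i, window y (cutPos σ x i) (σ (x i)).length = σ (x i)

lemma window_substImage [Nonempty B] {σ : A → List B} (hσ : ∀ a, σ a ≠ []) (x : ℤ → A) (i : ℤ) :
    window (substImage σ x) (cutPos σ x i) (σ (x i)).length = σ (x i) := by
  suffices h : ∃ y : ℤ → B, ∀ i, window y (cutPos σ x i) (σ (x i)).length = σ (x i) from
    Classical.epsilon_spec h i
  choose b hb hb' using exists_block hσ x
  refine ⟨fun k => (σ (x (b k)))[(k - cutPos σ x (b k)).toNat]'(by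
    have h1 := hb k
    have h2 := hb' k
    rw [cutPos_add_one] at h2
    omega), fun i => ?_⟩
  apply List.ext_getElem
  · simp
  · intro t h1 h2
    simp only [window, List.getElem_ofFn]
    have e : b (cutPos σ x i + t) = i :=
      block_unique hσ (hb _) (hb' _) (by omega) (by rw [cutPos_add_one]; omega)
    simp only [e, add_sub_cancel_left, Int.toNat_natCast]

lemma eq_substImage [Nonempty B] {σ : A → List B} (hσ : ∀ a, σ a ≠ []) {x : ℤ → A} {y : ℤ → B}
    (h : ∀ i, window y (cutPos σ x i) (σ (x i)).length = σ (x i)) : y = substImage σ x := by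
  funext k
  obtain ⟨i, h1, h2⟩ := exists_block hσ x k
  have e := (h i).trans (window_substImage hσ x i).symm
  rw [window_eq_iff] at e
  rw [cutPos_add_one] at h2
  have := e (k - cutPos σ x i).toNat (by omega)
  rwa [show cutPos σ x i + ((k - cutPos σ x i).toNat : ℤ) = k by omega] at this

lemma substImage_shiftBy [Nonempty B] {σ : A → List B} (hσ : ∀ a, σ a ≠ []) (x : ℤ → A)
    (s : ℤ) : substImage σ (shiftBy s x) = shiftBy (cutPos σ x s) (substImage σ x) := by
  symm
  apply eq_substImage hσ
  intro i
  rw [cutPos_shiftBy, shiftBy_apply]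
  unfold shiftBy
  rw [window_comp_add, sub_add_cancel, window_substImage hσ]

lemma window_substImage_flatMap [Nonempty B] {σ : A → List B} (hσ : ∀ a, σ a ≠ []) (x : ℤ → A)
    (i : ℤ) (n : ℕ) :
    window (substImage σ x) (cutPos σ x i) ((window x i n).flatMap σ).length =
      (window x i n).flatMap σ := by
  induction n with
  | zero => simp
  | succ n ih =>
    rw [window_add, List.flatMap_append, List.length_append, window_add, ih, ← cutPos_add_nat]
    simp [window_substImage hσ]

lemma cutPos_flatMap [Nonempty B] {C : Type*} {σ : B → List C} {ρ : A → List B}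
    (hρ : ∀ a, ρ a ≠ []) (x : ℤ → A) (i : ℤ) :
    cutPos (fun a => (ρ a).flatMap σ) x i = cutPos σ (substImage ρ x) (cutPos ρ x i) := by
  have := eq_cutPos (σ := fun a => (ρ a).flatMap σ) (x := x)
    (P := fun i => cutPos σ (substImage ρ x) (cutPos ρ x i)) (by simp) (fun i => by
      rw [cutPos_add_one, cutPos_add_nat, window_substImage hρ])
  exact (congrFun this i).symm

lemma substImage_flatMap [Nonempty B] {C : Type*} [Nonempty C] {σ : B → List C}
    {ρ : A → List B} (hσ : ∀ b, σ b ≠ []) (hρ : ∀ a, ρ a ≠ [])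
    (hσρ : ∀ a, (ρ a).flatMap σ ≠ []) (x : ℤ → A) :
    substImage (fun a => (ρ a).flatMap σ) x = substImage σ (substImage ρ x) := by
  symm
  apply eq_substImage hσρ
  intro i
  have := window_substImage_flatMap hσ (substImage ρ x) (cutPos ρ x i) (ρ (x i)).length
  rwa [window_substImage hρ, ← cutPos_flatMap hρ] at this

lemma cutPos_congr {σ : A → List B} {x y : ℤ → A} {a b : ℤ}
    (ha : a ≤ 0) (hb : 0 ≤ b) (h : ∀ i, a ≤ i → i < b → x i = y i) {i : ℤ} (hai : a ≤ i)
    (hib : i ≤ b) : cutPos σ x i = cutPos σ y i := by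
  rcases le_total 0 i with h0 | h0
  · induction i, h0 using Int.leInduction with
    | base => simp
    | succ k _ ih => rw [cutPos_add_one, cutPos_add_one, ih (by omega) (by omega),
        h k (by omega) (by omega)]
  · induction i, h0 using Int.leInductionDown with
    | base => simp
    | pred k _ ih =>
      have h1 := cutPos_add_one σ x (k - 1)
      have h2 := cutPos_add_one σ y (k - 1)
      rw [sub_add_cancel, ih (by omega) (by omega)] at h1
      rw [sub_add_cancel, ← h (k - 1) (by omega) (by omega)] at h2
      omega

lemma substImage_congr [Nonempty B] {σ : A → List B} (hσ : ∀ a, σ a ≠ []) {x y : ℤ → A}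
    {a b : ℤ} (ha : a ≤ 0) (hb : 0 ≤ b) (h : ∀ i, a ≤ i → i < b → x i = y i) {k : ℤ}
    (hak : cutPos σ x a ≤ k) (hkb : k < cutPos σ x b) : substImage σ x k = substImage σ y k := by
  obtain ⟨i, h1, h2⟩ := exists_block hσ x k
  have h3 := (strictMono_cutPos hσ x).lt_iff_lt.1 (hak.trans_lt h2)
  have h4 := (strictMono_cutPos hσ x).lt_iff_lt.1 (h1.trans_lt hkb)
  have hx := window_substImage hσ x i
  have hy := window_substImage hσ y i
  rw [← h i (by omega) h4, ← cutPos_congr ha hb h (by omega) h4.le] at hy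
  have e := hx.trans hy.symm
  rw [window_eq_iff] at e
  rw [cutPos_add_one] at h2
  have := e (k - cutPos σ x i).toNat (by omega)
  rwa [show cutPos σ x i + ((k - cutPos σ x i).toNat : ℤ) = k by omega] at this

end Image

section Levels

variable {A : Type*}

lemma iterate_flatMap (θ : A → List A) (k : ℕ) (w : List A) :
    (fun w : List A => w.flatMap θ)^[k] w = w.flatMap (substIter θ k) := by
  induction k generalizing w with
  | zero => exact (List.flatMap_singleton' w).symm
  | succ k ih =>
    rw [Function.iterate_succ_apply', ih, List.flatMap_assoc]
    congr 1
    funext a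
    simp only [substIter, Function.iterate_succ_apply']

lemma substIter_add (θ : A → List A) (k n : ℕ) (a : A) :
    substIter θ (k + n) a = (substIter θ n a).flatMap (substIter θ k) := by
  rw [substIter, Function.iterate_add_apply, iterate_flatMap]
  rfl

lemma substIter_ne_nil {θ : A → List A} (hθ : ∀ a, θ a ≠ []) (n : ℕ) (a : A) :
    substIter θ n a ≠ [] := by
  induction n with
  | zero => simp [substIter]
  | succ n ih =>
    rw [add_comm, substIter_add]
    obtain ⟨b, w, e⟩ := List.exists_cons_of_ne_nil ih
    rw [e, List.flatMap_cons]
    simp [substIter, hθ b]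

lemma length_substIter_pos {θ : A → List A} (hθ : ∀ a, θ a ≠ []) (n : ℕ) (a : A) :
    0 < (substIter θ n a).length :=
  List.length_pos_iff.2 (substIter_ne_nil hθ n a)

lemma le_length_flatMap {B : Type*} {σ : A → List B} (hσ : ∀ a, σ a ≠ []) (w : List A) :
    w.length ≤ (w.flatMap σ).length := by
  induction w with
  | nil => simp
  | cons a w ih =>
    have := List.length_pos_iff.2 (hσ a)
    simp only [List.flatMap_cons, List.length_append, List.length_cons]
    omega

lemma length_substIter_mono {θ : A → List A} (hθ : ∀ a, θ a ≠ []) {m n : ℕ} (h : m ≤ n) (a : A) :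
    (substIter θ m a).length ≤ (substIter θ n a).length := by
  obtain ⟨k, rfl⟩ := Nat.exists_eq_add_of_le' h
  rw [substIter_add]
  exact le_length_flatMap (substIter_ne_nil hθ k) _

lemma length_le_length_flatMap_of_mem {B : Type*} (σ : A → List B) {w : List A} {a : A}
    (h : a ∈ w) : (σ a).length ≤ (w.flatMap σ).length := by
  obtain ⟨s, t, rfl⟩ := List.append_of_mem h
  simp
  omega

lemma length_flatMap_le {B : Type*} (σ : A → List B) {K : ℕ} (hK : ∀ a, (σ a).length ≤ K)
    (w : List A) : (w.flatMap σ).length ≤ K * w.length := by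
  induction w with
  | nil => simp
  | cons a w ih =>
    have := hK a
    simp only [List.flatMap_cons, List.length_append, List.length_cons]
    rw [mul_add]
    omega

/-- The image of a bi-infinite sequence under the `n`-th iterate of `θ`. -/
noncomputable def levelImage [Nonempty A] (θ : A → List A) (n : ℕ) (x : ℤ → A) : ℤ → A :=
  substImage (substIter θ n) x

/-- The cut positions of the image of a bi-infinite sequence under the `n`-th iterate of `θ`. -/
def levelPos (θ : A → List A) (n : ℕ) (x : ℤ → A) : ℤ → ℤ :=
  cutPos (substIter θ n) x

@[simp] lemma levelPos_zero (θ : A → List A) (n : ℕ) (x : ℤ → A) : levelPos θ n x 0 = 0 :=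
  cutPos_zero _ _

lemma levelPos_add_one (θ : A → List A) (n : ℕ) (x : ℤ → A) (i : ℤ) :
    levelPos θ n x (i + 1) = levelPos θ n x i + (substIter θ n (x i)).length :=
  cutPos_add_one _ _ _

lemma levelPos_one (θ : A → List A) (n : ℕ) (x : ℤ → A) :
    levelPos θ n x 1 = (substIter θ n (x 0)).length := by
  simpa using levelPos_add_one θ n x 0

lemma levelPos_shiftBy (θ : A → List A) (n : ℕ) (x : ℤ → A) (s i : ℤ) :
    levelPos θ n (shiftBy s x) i = levelPos θ n x (i + s) - levelPos θ n x s :=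
  cutPos_shiftBy _ _ _ _

lemma levelPos_congr (θ : A → List A) (n : ℕ) {x y : ℤ → A} {a b : ℤ}
    (ha : a ≤ 0) (hb : 0 ≤ b) (h : ∀ i, a ≤ i → i < b → x i = y i) {i : ℤ} (hai : a ≤ i)
    (hib : i ≤ b) : levelPos θ n x i = levelPos θ n y i :=
  cutPos_congr ha hb h hai hib

lemma iterate_shiftMap (n : ℕ) (x : ℤ → A) : shiftMap^[n] x = shiftBy n x := by
  induction n with
  | zero => simp [shiftBy_zero]
  | succ n ih =>
    rw [Function.iterate_succ_apply', ih]
    funext j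
    simp only [shiftMap, shiftBy_apply]
    congr 1
    push_cast
    ring

section

variable {θ : A → List A}

lemma strictMono_levelPos (hθ : ∀ a, θ a ≠ []) (n : ℕ) (x : ℤ → A) : StrictMono (levelPos θ n x) :=
  strictMono_cutPos (substIter_ne_nil hθ n) x

lemma exists_level_block (hθ : ∀ a, θ a ≠ []) (n : ℕ) (x : ℤ → A) (k : ℤ) :
    ∃ i, levelPos θ n x i ≤ k ∧ k < levelPos θ n x (i + 1) :=
  exists_block (substIter_ne_nil hθ n) x k

lemma sub_le_levelPos_sub (hθ : ∀ a, θ a ≠ []) (n : ℕ) (x : ℤ → A) {i j : ℤ}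
    (h : i ≤ j) : j - i ≤ levelPos θ n x j - levelPos θ n x i :=
  sub_le_cutPos_sub (substIter_ne_nil hθ n) x h

variable [Nonempty A]

lemma levelImage_shiftBy (hθ : ∀ a, θ a ≠ []) (n : ℕ) (x : ℤ → A) (s : ℤ) :
    levelImage θ n (shiftBy s x) = shiftBy (levelPos θ n x s) (levelImage θ n x) :=
  substImage_shiftBy (substIter_ne_nil hθ n) x s

lemma levelImage_add (hθ : ∀ a, θ a ≠ []) (k n : ℕ) (x : ℤ → A) :
    levelImage θ (k + n) x = levelImage θ k (levelImage θ n x) := by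
  have e : substIter θ (k + n) = fun a => (substIter θ n a).flatMap (substIter θ k) :=
    funext fun a => substIter_add θ k n a
  unfold levelImage
  rw [e]
  refine substImage_flatMap (substIter_ne_nil hθ k) (substIter_ne_nil hθ n) (fun a => ?_) x
  rw [← substIter_add]
  exact substIter_ne_nil hθ _ a

lemma levelPos_add (hθ : ∀ a, θ a ≠ []) (k n : ℕ) (x : ℤ → A) (i : ℤ) :
    levelPos θ (k + n) x i = levelPos θ k (levelImage θ n x) (levelPos θ n x i) := by
  have e : substIter θ (k + n) = fun a => (substIter θ n a).flatMap (substIter θ k) :=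
    funext fun a => substIter_add θ k n a
  unfold levelImage levelPos
  rw [e]
  exact cutPos_flatMap (substIter_ne_nil hθ n) x i

lemma window_levelImage (hθ : ∀ a, θ a ≠ []) (n : ℕ) (x : ℤ → A) (i : ℤ) :
    window (levelImage θ n x) (levelPos θ n x i) (substIter θ n (x i)).length =
      substIter θ n (x i) :=
  window_substImage (substIter_ne_nil hθ n) x i

lemma window_levelImage_zero (hθ : ∀ a, θ a ≠ []) (n : ℕ) (x : ℤ → A) :
    window (levelImage θ n x) 0 (substIter θ n (x 0)).length = substIter θ n (x 0) := by
  simpa using window_levelImage hθ n x 0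

lemma levelImage_congr (hθ : ∀ a, θ a ≠ []) (n : ℕ) {x y : ℤ → A}
    {a b : ℤ} (ha : a ≤ 0) (hb : 0 ≤ b) (h : ∀ i, a ≤ i → i < b → x i = y i) {k : ℤ}
    (hak : levelPos θ n x a ≤ k) (hkb : k < levelPos θ n x b) :
    levelImage θ n x k = levelImage θ n y k :=
  substImage_congr (substIter_ne_nil hθ n) ha hb h hak hkb

lemma levelImage_apply_zero (hθ : ∀ a, θ a ≠ []) {n : ℕ} {a : A} (x : ℤ → A)
    (h : (substIter θ n (x 0)).head? = some a) : levelImage θ n x 0 = a := by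
  have e := window_levelImage_zero hθ n x
  obtain ⟨s, hs⟩ := Nat.exists_eq_add_of_le' (length_substIter_pos hθ n (x 0))
  rw [← e, hs, add_comm s 1, window_add] at h
  simpa using h

lemma levelImage_apply_neg_one (hθ : ∀ a, θ a ≠ []) {n : ℕ} {a : A} (x : ℤ → A)
    (h : (substIter θ n (x (-1))).getLast? = some a) : levelImage θ n x (-1) = a := by
  have e := window_levelImage hθ n x (-1)
  have e2 := levelPos_add_one θ n x (-1)
  obtain ⟨s, hs⟩ := Nat.exists_eq_add_of_le' (length_substIter_pos hθ n (x (-1)))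
  rw [← e, hs, window_add] at h
  simp only [Int.reduceNeg, neg_add_cancel, levelPos_zero, hs] at e2
  have e3 : levelPos θ n x (-1) + (s : ℤ) = -1 := by push_cast at e2; omega
  simpa [e3] using h

/-- `t` is a boundary between two images of level `k` in the image of level `k + i`. -/
def IsCut (θ : A → List A) (k i : ℕ) (z : ℤ → A) (t : ℤ) : Prop :=
  ∃ v, t = levelPos θ k (levelImage θ i z) v

lemma IsCut.mono (hθ : ∀ a, θ a ≠ []) {k k' i : ℕ} {z : ℤ → A} {t : ℤ}
    (h : IsCut θ (k + k') i z t) : IsCut θ k (k' + i) z t := by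
  obtain ⟨v, rfl⟩ := h
  exact ⟨_, by rw [levelPos_add hθ, levelImage_add hθ]⟩

lemma IsCut.congr (hθ : ∀ a, θ a ≠ []) {k i : ℕ} {z z' : ℤ → A} {t : ℤ}
    (hz : z 0 = z' 0) (h0 : 0 ≤ t) (h1 : t < (substIter θ (k + i) (z 0)).length)
    (h : IsCut θ k i z t) : IsCut θ k i z' t := by
  obtain ⟨v, rfl⟩ := h
  have hz' : ∀ i : ℤ, 0 ≤ i → i < 1 → z i = z' i := fun i hi0 hi1 => by
    rwa [show i = 0 by omega]
  have hm := strictMono_levelPos hθ k (levelImage θ i z)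
  rw [← levelPos_one, levelPos_add hθ, hm.lt_iff_lt] at h1
  rw [← levelPos_zero θ k (levelImage θ i z), hm.le_iff_le] at h0
  exact ⟨v, levelPos_congr θ k le_rfl (h0.trans h1.le) (fun j hj0 hj1 =>
    levelImage_congr hθ i le_rfl zero_le_one hz' (by simpa using hj0) hj1) h0 h1.le⟩

end

end Levels

section Subshift

variable {A : Type*}

lemma mem_substShift_iff {θ : A → List A} {x : ℤ → A} :
    x ∈ substShift θ ↔ ∀ (i : ℤ) (n : ℕ), ∃ k a, window x i n <:+: substIter θ k a := Iff.rfl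

lemma shiftBy_mem_substShift {θ : A → List A} {x : ℤ → A} (h : x ∈ substShift θ) (k : ℤ) :
    shiftBy k x ∈ substShift θ := by
  intro i n
  have := h (i + k) n
  change ∃ k' a, window _ _ _ <:+: _ at this
  rw [← window_comp_add] at this
  exact this

lemma List.IsInfix.flatMap_infix {B : Type*} (σ : A → List B) {v w : List A} (h : v <:+: w) :
    v.flatMap σ <:+: w.flatMap σ := by
  obtain ⟨s, t, rfl⟩ := h
  simp only [List.flatMap_append]
  exact ⟨_, _, rfl⟩

lemma levelImage_mem_substShift [Nonempty A] {θ : A → List A} (hθ : ∀ a, θ a ≠ []) {x : ℤ → A}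
    (h : x ∈ substShift θ) (m : ℕ) : levelImage θ m x ∈ substShift θ := by
  rw [mem_substShift_iff]
  intro i n
  obtain ⟨s, hs, -⟩ := exists_level_block hθ m x i
  obtain ⟨t, ht, ht'⟩ := exists_level_block hθ m x (i + n)
  have hst : s ≤ t := by
    have := (strictMono_levelPos hθ m x).lt_iff_lt.1
      (hs.trans_lt ((by omega : i ≤ i + n).trans_lt ht'))
    omega
  obtain ⟨k, a, hk⟩ := h s (t + 1 - s).toNat
  change window _ _ _ <:+: _ at hk
  refine ⟨m + k, a, ?_⟩
  rw [substIter_add]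
  refine List.IsInfix.trans ?_ (List.IsInfix.flatMap_infix (substIter θ m) hk)
  have e1 := window_substImage_flatMap (substIter_ne_nil hθ m) x s (t + 1 - s).toNat
  have e2 := cutPos_add_nat (substIter θ m) x s (t + 1 - s).toNat
  rw [show s + ((t + 1 - s).toNat : ℤ) = t + 1 by omega] at e2
  rw [← e1]
  have := window_infix (substImage (substIter θ m) x) (cutPos (substIter θ m) x s)
    (i - cutPos (substIter θ m) x s).toNat n
    ((window x s (t + 1 - s).toNat).flatMap (substIter θ m)).length
    (by unfold levelPos at *; omega)
  rwa [show cutPos (substIter θ m) x s + ((i - cutPos (substIter θ m) x s).toNat : ℤ) = i by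
    unfold levelPos at *; omega] at this

end Subshift

section Agreement

variable {A : Type*}

/-- Two bi-infinite sequences agree on `[-K, K]`. -/
def Agree (K : ℕ) (x y : ℤ → A) : Prop := ∀ i : ℤ, -K ≤ i → i ≤ K → x i = y i

lemma Agree.symm {K : ℕ} {x y : ℤ → A} (h : Agree K x y) : Agree K y x :=
  fun i h1 h2 => (h i h1 h2).symm

lemma Agree.trans {K : ℕ} {x y z : ℤ → A} (h : Agree K x y) (h' : Agree K y z) : Agree K x z :=
  fun i h1 h2 => (h i h1 h2).trans (h' i h1 h2)

lemma Agree.mono {K L : ℕ} (hKL : L ≤ K) {x y : ℤ → A} (h : Agree K x y) : Agree L x y :=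
  fun i h1 h2 => h i (by omega) (by omega)

lemma Agree.window_eq {K : ℕ} {x y : ℤ → A} (h : Agree K x y) {i : ℤ} {n : ℕ}
    (h1 : -K ≤ i) (h2 : i + n ≤ K + 1) : window x i n = window y i n :=
  window_eq_iff.2 fun t ht => h _ (by omega) (by omega)

lemma tendsto_of_agree [TopologicalSpace A] {x : ℤ → A} {u : ℕ → ℤ → A}
    (h : ∀ n, Agree n (u n) x) : Tendsto u atTop (𝓝 x) := by
  rw [tendsto_pi_nhds]
  intro j
  refine tendsto_const_nhds.congr' ?_
  filter_upwards [eventually_ge_atTop j.natAbs] with n hn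
  exact (h n j (by omega) (by omega)).symm

lemma mem_closure_of_agree [TopologicalSpace A] {s : Set (ℤ → A)} {x : ℤ → A}
    (h : ∀ K, ∃ y ∈ s, Agree K y x) : x ∈ closure s := by
  choose u hu hux using h
  exact mem_closure_of_tendsto (tendsto_of_agree hux) (Eventually.of_forall hu)

lemma continuous_shiftBy [TopologicalSpace A] (k : ℤ) : Continuous (shiftBy k : (ℤ → A) → ℤ → A) :=
  continuous_pi fun j => continuous_apply (j + k)

/-- A locally constant function on a compact set of sequences depends on a finite window. -/
lemma exists_window_of_continuous [TopologicalSpace A] [Finite A] {X : Set (ℤ → A)}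
    [CompactSpace X] {D : Type*} [TopologicalSpace D] [DiscreteTopology D] {f : X → D}
    (hf : Continuous f) :
    ∃ K : ℕ, ∀ x y : X, Agree K x.1 y.1 → f x = f y := by
  by_contra! h
  choose u v huv hne using h
  obtain ⟨x, φ, hφ, hu⟩ := CompactSpace.tendsto_subseq u
  have hv : Tendsto (v ∘ φ) atTop (𝓝 x) := by
    rw [tendsto_subtype_rng] at hu ⊢
    rw [tendsto_pi_nhds] at hu ⊢
    intro j
    refine (hu j).congr' ?_
    filter_upwards [eventually_ge_atTop j.natAbs] with n hn
    have := hφ.id_le n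
    exact huv (φ n) j (by simp only [id] at this; omega) (by simp only [id] at this; omega)
  have h1 : ∀ᶠ y in 𝓝 x, f y = f x :=
    hf.continuousAt.eventually ((isOpen_discrete {f x}).mem_nhds rfl)
  obtain ⟨n, hn1, hn2⟩ := ((hu.eventually h1).and (hv.eventually h1)).exists
  exact hne _ (hn1.trans hn2.symm)

variable [TopologicalSpace A] [DiscreteTopology A]

lemma eventually_agree (K : ℕ) (x : ℤ → A) : ∀ᶠ y in 𝓝 x, Agree K y x := by
  have h : ∀ᶠ y in 𝓝 x, ∀ i ∈ Finset.Icc (-(K : ℤ)) K, y i = x i := by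
    rw [Filter.eventually_all_finset]
    intro i _
    have hi : Continuous fun y : ℤ → A => y i := continuous_apply i
    exact hi.continuousAt.eventually ((isOpen_discrete {x i}).mem_nhds rfl)
  filter_upwards [h] with y hy i h1 h2
  exact hy i (by simp [h1, h2])

lemma exists_agree_of_mem_closure {s : Set (ℤ → A)} {x : ℤ → A} (h : x ∈ closure s) (K : ℕ) :
    ∃ y ∈ s, Agree K y x := by
  obtain ⟨y, hy, hys⟩ := mem_closure_iff_nhds.1 h _ (eventually_agree K x)
  exact ⟨y, hys, hy⟩

lemma continuous_of_agree {B : Type*} [TopologicalSpace B] {f : (ℤ → A) → B}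
    (h : ∀ x, ∃ K, ∀ y, Agree K y x → f y = f x) : Continuous f := by
  refine continuous_iff_continuousAt.2 fun x => ?_
  obtain ⟨K, hK⟩ := h x
  refine (continuousAt_const (y := f x)).congr ?_
  filter_upwards [eventually_agree K x] with y hy
  exact (hK y hy).symm

lemma isClosed_substShift (θ : A → List A) : IsClosed (substShift θ) := by
  refine isClosed_of_closure_subset fun x hx => ?_
  rw [mem_substShift_iff]
  intro i n
  obtain ⟨y, hy, hyx⟩ := exists_agree_of_mem_closure hx (i.natAbs + n)
  rw [← hyx.window_eq (by omega) (by omega)]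
  exact hy i n

instance compactSpace_substShift [Finite A] (θ : A → List A) : CompactSpace (substShift θ) :=
  isCompact_iff_compactSpace.1 (isClosed_substShift θ).isCompact

lemma continuous_levelImage [Nonempty A] {θ : A → List A} (hθ : ∀ a, θ a ≠ []) (n : ℕ) :
    Continuous (levelImage θ n) := by
  refine continuous_pi fun k => continuous_of_agree fun x => ⟨k.natAbs + 1, fun y hy => ?_⟩
  symm
  have h1 := sub_le_levelPos_sub hθ n x (i := -(k.natAbs : ℤ)) (j := 0) (by omega)
  have h2 := sub_le_levelPos_sub hθ n x (i := 0) (j := (k.natAbs : ℤ) + 1) (by omega)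
  rw [levelPos_zero] at h1 h2
  exact levelImage_congr hθ n (a := -(k.natAbs : ℤ)) (b := k.natAbs + 1) (by omega) (by omega)
    (fun i h3 h4 => (hy i (by omega) (by omega)).symm) (by omega) (by omega)

end Agreement

section Standing

variable {A : Type*}

/-- From level `d` on, all the words `θ^n(a)` begin with `l`, end with `r` and contain all
letters; their lengths tend to infinity, and the subshift is aperiodic. -/
structure StronglyPrimitive (θ : A → List A) (d : ℕ) (l r : A) : Prop where
  ne_nil : ∀ a, θ a ≠ []
  head : ∀ n, d ≤ n → ∀ a, (substIter θ n a).head? = some l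
  last : ∀ n, d ≤ n → ∀ a, (substIter θ n a).getLast? = some r
  mem : ∀ n, d ≤ n → ∀ a b, b ∈ substIter θ n a
  grow : ∀ a, Tendsto (fun k => (substIter θ k a).length) atTop atTop
  aper : SubstAperiodic θ

lemma exists_stronglyPrimitive [Finite A] {θ : A → List A} (hθ : ∀ a, θ a ≠ [])
    (hproper : SubstProper θ) (hprim : SubstPrimitive θ) (haper : SubstAperiodic θ) :
    ∃ d l r, StronglyPrimitive θ d l r := by
  cases nonempty_fintype A
  obtain ⟨l, r, k, hk⟩ := hproper
  have hhead : ∀ n, k ≤ n → ∀ a, (substIter θ n a).head? = some l := by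
    intro n hn a
    obtain ⟨j, rfl⟩ := Nat.exists_eq_add_of_le hn
    obtain ⟨b, w, e⟩ := List.exists_cons_of_ne_nil (substIter_ne_nil hθ j a)
    rw [substIter_add, e, List.flatMap_cons, List.head?_append, (hk b).1]
    rfl
  have hlast : ∀ n, k ≤ n → ∀ a, (substIter θ n a).getLast? = some r := by
    intro n hn a
    obtain ⟨j, rfl⟩ := Nat.exists_eq_add_of_le hn
    obtain ⟨w, b, e⟩ := List.eq_nil_or_concat (substIter θ j a) |>.resolve_left
      (substIter_ne_nil hθ j a)
    rw [substIter_add, e, List.concat_eq_append, List.flatMap_append, List.getLast?_append]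
    simp [(hk b).2]
  choose j hj using hprim.1 l
  refine ⟨k + ∑ b, j b, l, r, hθ, fun n hn => hhead n (by omega), fun n hn => hlast n (by omega),
    fun n hn a b => ?_, hprim.2, haper⟩
  have hjb : j b ≤ ∑ b, j b := Finset.single_le_sum (f := j) (by simp) (Finset.mem_univ b)
  obtain ⟨i, rfl⟩ := Nat.exists_eq_add_of_le (show j b ≤ n by omega)
  rw [substIter_add, List.mem_flatMap]
  exact ⟨l, List.mem_of_mem_head? (hhead i (by omega) a), hj b⟩

namespace StronglyPrimitive

variable {θ : A → List A} {d : ℕ} {l r : A}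

lemma exists_length_ge [Finite A] (h : StronglyPrimitive θ d l r) (K : ℕ) :
    ∃ n₀, ∀ n ≥ n₀, ∀ a, K ≤ (substIter θ n a).length := by
  have : ∀ᶠ n in atTop, ∀ a, K ≤ (substIter θ n a).length :=
    eventually_all.2 fun a => (h.grow a).eventually_ge_atTop K
  exact eventually_atTop.1 this

variable [Nonempty A]

lemma levelImage_zero (h : StronglyPrimitive θ d l r) {n : ℕ} (hn : d ≤ n) (x : ℤ → A) :
    levelImage θ n x 0 = l :=
  levelImage_apply_zero h.ne_nil x (h.head n hn _)

lemma levelImage_neg_one (h : StronglyPrimitive θ d l r) {n : ℕ} (hn : d ≤ n) (x : ℤ → A) :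
    levelImage θ n x (-1) = r :=
  levelImage_apply_neg_one h.ne_nil x (h.last n hn _)

/-- Images of high level agree around the images of words on which the sequences agree. -/
lemma levelImage_agree_around (h : StronglyPrimitive θ d l r) {k n : ℕ} (hn : d ≤ n) {K : ℕ}
    (hK : ∀ a, K ≤ (substIter θ k a).length) {x y : ℤ → A} {s : ℤ} (hs : 0 ≤ s)
    (hxy : ∀ i, 0 ≤ i → i < s → x i = y i) {i : ℤ} (h1 : -K ≤ i)
    (h2 : i < levelPos θ (k + n) x s + K) :
    levelImage θ (k + n) x i = levelImage θ (k + n) y i := by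
  have hθ := h.ne_nil
  have e : levelPos θ n x s = levelPos θ n y s := levelPos_congr θ n le_rfl hs hxy hs le_rfl
  have hpos : 0 ≤ levelPos θ n x s := by
    simpa using (strictMono_levelPos hθ n x).monotone hs
  have hat : ∀ z : ℤ → A, levelImage θ n z (levelPos θ n z s) = l := by
    intro z
    have := h.levelImage_zero hn (shiftBy s z)
    rwa [levelImage_shiftBy hθ, shiftBy_apply, zero_add] at this
  have hag : ∀ j, -1 ≤ j → j < levelPos θ n x s + 1 → levelImage θ n x j = levelImage θ n y j := by
    intro j hj1 hj2
    rcases eq_or_lt_of_le hj1 with rfl | hj1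
    · rw [h.levelImage_neg_one hn, h.levelImage_neg_one hn]
    rcases eq_or_lt_of_le (Int.lt_add_one_iff.1 hj2) with rfl | hj2
    · rw [hat x, e, hat y]
    · exact levelImage_congr hθ n le_rfl hs hxy (by rw [levelPos_zero]; omega) hj2
  rw [levelImage_add hθ, levelImage_add hθ]
  refine levelImage_congr hθ k (by norm_num) (by omega) hag ?_ ?_
  · have := levelPos_add_one θ k (levelImage θ n x) (-1)
    have := hK (levelImage θ n x (-1))
    simp only [Int.reduceNeg, neg_add_cancel, levelPos_zero] at *
    omega
  · rw [levelPos_add_one, ← levelPos_add hθ]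
    have := hK (levelImage θ n x (levelPos θ n x s))
    omega

lemma exists_infix_levelImage (h : StronglyPrimitive θ d l r) {y : ℤ → A} (hy : y ∈ substShift θ)
    (n : ℕ) : ∃ K₀, ∀ K ≥ K₀, ∀ z : ℤ → A, ∃ u : ℕ, u + n ≤ (substIter θ K (z 0)).length ∧
      window y 0 n = window (levelImage θ K z) u n := by
  obtain ⟨k, a, hk⟩ := hy 0 n
  change window _ _ _ <:+: _ at hk
  refine ⟨k + d, fun K hK z => ?_⟩
  obtain ⟨j, rfl⟩ := Nat.exists_eq_add_of_le (show k ≤ K by omega)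
  have h1 : substIter θ k a <:+: substIter θ (k + j) (z 0) := by
    rw [substIter_add]
    simpa using List.IsInfix.flatMap_infix (substIter θ k)
      (List.singleton_infix_iff _ _ |>.2 (h.mem j (by omega) (z 0) a))
  have h2 := hk.trans h1
  rw [← window_levelImage_zero h.ne_nil] at h2
  obtain ⟨u, hu, e⟩ := exists_eq_window_of_infix h2
  rw [length_window, zero_add] at e
  exact ⟨u, by simpa using hu, e⟩

variable [Finite A] [TopologicalSpace A] [DiscreteTopology A]

lemma nonempty_substShift (h : StronglyPrimitive θ d l r) : (substShift θ).Nonempty := by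
  have z : ℤ → A := fun _ => l
  have hex : ∀ N : ℕ, ∃ n, 2 * N + 1 ≤ (substIter θ n (z 0)).length := fun N => by
    obtain ⟨n, hn⟩ := h.exists_length_ge (2 * N + 1)
    exact ⟨n, hn n le_rfl _⟩
  choose n hn using hex
  obtain ⟨x, φ, hφ, hx⟩ := CompactSpace.tendsto_subseq
    fun N : ℕ => shiftBy (N : ℤ) (levelImage θ (n N) z)
  refine ⟨x, ?_⟩
  rw [mem_substShift_iff]
  intro i m
  obtain ⟨N, hN, hN'⟩ := ((hx.eventually (eventually_agree (i.natAbs + m) x)).and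
    (eventually_ge_atTop (i.natAbs + m))).exists
  have := hφ.id_le N
  simp only [id] at this
  refine ⟨n (φ N), z 0, ?_⟩
  rw [← hN.window_eq (by omega) (by omega),
    ← window_levelImage_zero h.ne_nil]
  change window (fun j => levelImage θ (n (φ N)) z (j + (φ N : ℤ))) i m <:+: _
  rw [window_comp_add]
  have h2 := window_infix (levelImage θ (n (φ N)) z) 0 (i + φ N).toNat m
    (substIter θ (n (φ N)) (z 0)).length (by have := hn (φ N); omega)
  rwa [show (0 : ℤ) + ((i + φ N).toNat : ℤ) = i + φ N by omega] at h2

/-- Every point of the subshift is a translate of a point in the image of any level. -/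
lemma exists_eq_shiftBy_levelImage (h : StronglyPrimitive θ d l r) {y : ℤ → A}
    (hy : y ∈ substShift θ) (n : ℕ) : ∃ z ∈ substShift θ, ∃ s : ℤ, 0 ≤ s ∧
      s < (substIter θ n (z 0)).length ∧ y = shiftBy s (levelImage θ n z) := by
  have hθ := h.ne_nil
  have norm : ∀ z ∈ substShift θ, ∀ s : ℤ, ∃ z' ∈ substShift θ, ∃ s' : ℤ, 0 ≤ s' ∧
      s' < (substIter θ n (z' 0)).length ∧
        shiftBy s (levelImage θ n z) = shiftBy s' (levelImage θ n z') := by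
    intro z hz s
    obtain ⟨i, h1, h2⟩ := exists_level_block hθ n z s
    rw [levelPos_add_one] at h2
    refine ⟨shiftBy i z, shiftBy_mem_substShift hz i, s - levelPos θ n z i, by omega, ?_, ?_⟩
    · rw [shiftBy_apply, zero_add]
      omega
    · rw [levelImage_shiftBy hθ, shiftBy_shiftBy, sub_add_cancel]
  cases nonempty_fintype A
  let L : ℕ := ∑ a, (substIter θ n a).length
  have hL : ∀ a, (substIter θ n a).length ≤ L := fun a =>
    Finset.single_le_sum (f := fun a => (substIter θ n a).length) (by simp) (Finset.mem_univ a)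
  let R : Set (ℤ → A) := ⋃ s ∈ Finset.range (L + 1),
    (fun z => shiftBy (s : ℤ) (levelImage θ n z)) '' substShift θ
  have hR : IsClosed R := by
    refine isClosed_biUnion_finset fun s _ => (IsCompact.image ?_ ?_).isClosed
    · exact (isClosed_substShift θ).isCompact
    · exact (continuous_shiftBy _).comp (continuous_levelImage hθ n)
  have hyR : y ∈ closure R := by
    refine mem_closure_of_agree fun K => ?_
    obtain ⟨x₀, hx₀⟩ := h.nonempty_substShift
    obtain ⟨K₀, hK₀⟩ := h.exists_infix_levelImage (shiftBy_mem_substShift hy (-K)) (2 * K + 1)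
    obtain ⟨u, -, hu⟩ := hK₀ (n + K₀) (by omega) x₀
    obtain ⟨z, hz, s, hs0, hs, e⟩ := norm _ (levelImage_mem_substShift hθ hx₀ K₀) (u + K)
    refine ⟨shiftBy s (levelImage θ n z), ?_, fun i h1 h2 => ?_⟩
    · simp only [R, Set.mem_iUnion]
      refine ⟨s.toNat, ?_, z, hz, ?_⟩
      · have := hL (z 0)
        rw [Finset.mem_range]
        omega
      · simp only [Int.toNat_of_nonneg hs0]
    · rw [← e]
      rw [window_eq_iff] at hu
      have := hu (i + K).toNat (by omega)
      rw [levelImage_add hθ, shiftBy_apply] at this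
      rw [shiftBy_apply]
      rw [show (0 : ℤ) + ((i + K).toNat : ℤ) + -K = i by omega,
        show (u : ℤ) + ((i + K).toNat : ℤ) = i + (u + K) by omega] at this
      exact this.symm
  rw [hR.closure_eq] at hyR
  simp only [R, Set.mem_iUnion] at hyR
  obtain ⟨s, -, z, hz, rfl⟩ := hyR
  exact norm z hz s

/-- The point fixed by all iterates of the substitution; the images of high level are
close to it. -/
lemma exists_fixedPoint (h : StronglyPrimitive θ d l r) : ∃ ω ∈ substShift θ,
    (∀ n, levelImage θ n ω = ω) ∧
      ∀ K : ℕ, ∃ q₀, ∀ q ≥ q₀, ∀ x, Agree K (levelImage θ q x) ω := by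
  have hθ := h.ne_nil
  obtain ⟨ω, hω⟩ := IsCompact.nonempty_iInter_of_sequence_nonempty_isCompact_isClosed
    (fun n => levelImage θ n '' substShift θ)
    (fun n => by
      rintro _ ⟨x, hx, rfl⟩
      exact ⟨levelImage θ 1 x, levelImage_mem_substShift hθ hx 1, (levelImage_add hθ n 1 x).symm⟩)
    (fun n => h.nonempty_substShift.image _)
    ((isClosed_substShift θ).isCompact.image (continuous_levelImage hθ 0))
    (fun n => ((isClosed_substShift θ).isCompact.image (continuous_levelImage hθ n)).isClosed)
  rw [Set.mem_iInter] at hω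
  have hclose : ∀ K : ℕ, ∃ q₀, ∀ q ≥ q₀, ∀ x y,
      Agree K (levelImage θ q x) (levelImage θ q y) := by
    intro K
    obtain ⟨k, hk⟩ := h.exists_length_ge (K + 1)
    refine ⟨k + d, fun q hq x y i h1 h2 => ?_⟩
    obtain ⟨n, rfl⟩ := Nat.exists_eq_add_of_le (show k ≤ q by omega)
    exact h.levelImage_agree_around (show d ≤ n by omega) (hk k le_rfl) le_rfl
      (fun i _ _ => by omega) (by push_cast; omega) (by rw [levelPos_zero]; push_cast; omega)
  refine ⟨ω, ?_, fun n => ?_, fun K => ?_⟩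
  · obtain ⟨x, hx, rfl⟩ := hω 0
    exact levelImage_mem_substShift hθ hx 0
  · funext i
    obtain ⟨q, hq⟩ := hclose i.natAbs
    obtain ⟨x, hx, e⟩ := hω q
    have := hq q le_rfl (levelImage θ n x) x i (by omega) (by omega)
    rwa [← levelImage_add hθ, add_comm, levelImage_add hθ, e] at this
  · obtain ⟨q₀, hq⟩ := hclose K
    refine ⟨q₀, fun q hq' x => ?_⟩
    obtain ⟨y, hy, e⟩ := hω q
    have := hq q hq' x y
    rwa [e] at this

end StronglyPrimitive

end Standing

section Recognizability

namespace StronglyPrimitive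

variable {A : Type*} {θ : A → List A} {d : ℕ} {l r : A} [Finite A]

/-- The lengths of the images grow in a controlled way. -/
lemma exists_level_length (h : StronglyPrimitive θ d l r) (c₀ : ℕ) : ∃ C, 1 ≤ C ∧
    ∀ e, 1 ≤ e → ∃ k, (∀ a, e ≤ (substIter θ k a).length) ∧
      ∀ a, (substIter θ (k + c₀) a).length ≤ C * e := by
  classical
  cases nonempty_fintype A
  have hθ := h.ne_nil
  let L : ℕ → ℕ := fun n => ∑ a, (substIter θ n a).length
  have hL : ∀ n a, (substIter θ n a).length ≤ L n := fun n a =>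
    Finset.single_le_sum (f := fun a => (substIter θ n a).length) (by simp) (Finset.mem_univ a)
  refine ⟨L (c₀ + d + 1), (length_substIter_pos hθ _ l).trans_le (hL _ l), fun e he => ?_⟩
  have hex : ∃ k, ∀ a, e ≤ (substIter θ k a).length := by
    obtain ⟨n, hn⟩ := h.exists_length_ge e
    exact ⟨n, hn n le_rfl⟩
  refine ⟨Nat.find hex, Nat.find_spec hex, fun a => ?_⟩
  have hmin := fun j hj => Nat.find_min hex (m := j) hj
  generalize Nat.find hex = k at hmin
  rcases Nat.lt_or_ge k (d + 1) with hk | hk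
  · calc (substIter θ (k + c₀) a).length ≤ (substIter θ (c₀ + d + 1) a).length :=
          length_substIter_mono hθ (by omega) a
      _ ≤ L (c₀ + d + 1) := hL _ a
      _ ≤ L (c₀ + d + 1) * e := Nat.le_mul_of_pos_right _ he
  · obtain ⟨j, rfl⟩ := Nat.exists_eq_add_of_le' hk
    have := hmin (j + d) (by omega)
    push Not at this
    obtain ⟨a₀, ha₀⟩ := this
    have h1 : (substIter θ j a).length ≤ e := by
      rw [substIter_add] at ha₀
      exact (length_le_length_flatMap_of_mem _ (h.mem d le_rfl a₀ a)).trans ha₀.le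
    rw [show j + (d + 1) + c₀ = c₀ + d + 1 + j by omega, substIter_add]
    exact (length_flatMap_le _ (hL _) _).trans (Nat.mul_le_mul_left _ h1)

variable [Nonempty A]

/-- All two-letter words of the subshift occur in all images of letters of some level. -/
lemma exists_level_pairs (h : StronglyPrimitive θ d l r) : ∃ c₀, ∀ y ∈ substShift θ,
    ∀ z : ℤ → A, ∃ u : ℤ, 0 ≤ u ∧ u + 2 ≤ (substIter θ c₀ (z 0)).length ∧
      y 0 = levelImage θ c₀ z u ∧ y 1 = levelImage θ c₀ z (u + 1) := by
  cases nonempty_fintype A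
  have key : ∀ ab : A × A, ∃ K₀, ∀ K ≥ K₀, ∀ y ∈ substShift θ, y 0 = ab.1 → y 1 = ab.2 →
      ∀ z : ℤ → A, ∃ u : ℤ, 0 ≤ u ∧ u + 2 ≤ (substIter θ K (z 0)).length ∧
        y 0 = levelImage θ K z u ∧ y 1 = levelImage θ K z (u + 1) := by
    intro ab
    by_cases hab : ∃ y ∈ substShift θ, y 0 = ab.1 ∧ y 1 = ab.2
    · obtain ⟨y, hy, h0, h1⟩ := hab
      obtain ⟨K₀, hK₀⟩ := h.exists_infix_levelImage hy 2
      refine ⟨K₀, fun K hK y' _ h0' h1' z => ?_⟩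
      obtain ⟨u, hu, e⟩ := hK₀ K hK z
      rw [window_eq_iff] at e
      have e0 := e 0 (by norm_num)
      have e1 := e 1 (by norm_num)
      simp only [Nat.cast_zero, add_zero, Nat.cast_one, zero_add] at e0 e1
      exact ⟨u, by omega, by omega, by rw [← e0, h0, h0'], by rw [← e1, h1, h1']⟩
    · exact ⟨0, fun K _ y hy h0 h1 => absurd ⟨y, hy, h0, h1⟩ hab⟩
  choose K₀ hK₀ using key
  refine ⟨∑ ab, K₀ ab, fun y hy => hK₀ (y 0, y 1) _ ?_ y hy rfl rfl⟩
  exact Finset.single_le_sum (f := K₀) (by simp) (Finset.mem_univ _)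

variable [TopologicalSpace A] [DiscreteTopology A]

/-- Linear recurrence: pairs of letters at distance `e` occur in all long images of letters. -/
lemma exists_linear_recurrence (h : StronglyPrimitive θ d l r) : ∃ C : ℕ, 1 ≤ C ∧
    ∀ e : ℕ, 1 ≤ e → ∀ N (z : ℤ → A), C * e < (substIter θ N (z 0)).length →
      ∀ x ∈ substShift θ, ∃ o : ℤ, 0 ≤ o ∧ o + e < (substIter θ N (z 0)).length ∧
        x 0 = levelImage θ N z o ∧ x e = levelImage θ N z (o + e) := by
  have hθ := h.ne_nil
  obtain ⟨c₀, hc₀⟩ := h.exists_level_pairs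
  obtain ⟨C, hC, hCe⟩ := h.exists_level_length c₀
  refine ⟨C, hC, fun e he N z hN x hx => ?_⟩
  obtain ⟨k, hk, hk'⟩ := hCe e he
  have hkN : k + c₀ ≤ N := by
    by_contra hlt
    have := length_substIter_mono hθ (show N ≤ k + c₀ by omega) (z 0)
    have := hk' (z 0)
    omega
  obtain ⟨j, rfl⟩ := Nat.exists_eq_add_of_le hkN
  obtain ⟨y, hy, s, hs0, hs, rfl⟩ := h.exists_eq_shiftBy_levelImage hx k
  set w := levelImage θ j z with hw
  obtain ⟨u, hu0, hu2, e0, e1⟩ := hc₀ y hy w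
  set v := levelImage θ c₀ w with hv
  have hlen : levelPos θ k v (u + 2) ≤ (substIter θ (k + c₀ + j) (z 0)).length := by
    have h1 : levelPos θ k v (u + 2) ≤ levelPos θ k v (levelPos θ c₀ w 1) :=
      (strictMono_levelPos hθ k v).monotone (by rw [levelPos_one]; omega)
    rw [hv, ← levelPos_add hθ] at h1
    refine h1.trans ?_
    rw [← levelPos_one, levelPos_add hθ (k + c₀) j]
    refine (strictMono_levelPos hθ _ _).monotone ?_
    rw [levelPos_one]
    have := length_substIter_pos hθ j (z 0)
    omega
  have hagree : ∀ i, 0 ≤ i → i < 2 → y i = shiftBy u v i := by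
    intro i h1 h2
    rcases show i = 0 ∨ i = 1 by omega with rfl | rfl
    · rw [shiftBy_apply, zero_add, e0]
    · rw [shiftBy_apply, add_comm 1 u, e1]
  have h2 : s + e < levelPos θ k y 2 := by
    rw [show (2 : ℤ) = 1 + 1 by norm_num, levelPos_add_one, levelPos_one]
    have := hk (y 1)
    omega
  have h2' : levelPos θ k y 2 = levelPos θ k v (u + 2) - levelPos θ k v u := by
    rw [levelPos_congr θ k le_rfl (by norm_num) hagree (by norm_num) le_rfl, levelPos_shiftBy,
      add_comm u 2]
  have hu : 0 ≤ levelPos θ k v u := by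
    simpa using (strictMono_levelPos hθ k v).monotone hu0
  have himg : ∀ i, 0 ≤ i → i < levelPos θ k y 2 →
      levelImage θ k y i = levelImage θ (k + c₀ + j) z (levelPos θ k v u + i) := by
    intro i hi0 hi2
    rw [levelImage_congr hθ k le_rfl (by norm_num) hagree (by simpa using hi0) hi2,
      levelImage_shiftBy hθ, shiftBy_apply, levelImage_add hθ, levelImage_add hθ, add_comm]
  refine ⟨levelPos θ k v u + s, by omega, by omega, ?_, ?_⟩
  · rw [shiftBy_apply, zero_add, himg s hs0 (by omega)]
  · rw [shiftBy_apply, himg _ (by omega) (by omega)]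
    congr 1
    omega

/-- If a point is read at two different places of the images of two points with the same letter
at the origin, then these places are far apart. -/
lemma exists_return_bound (h : StronglyPrimitive θ d l r) : ∃ C : ℕ, 1 ≤ C ∧
    ∀ N (z z' : ℤ → A) (t t' : ℤ), z 0 = z' 0 → t < t' →
      shiftBy t (levelImage θ N z) = shiftBy t' (levelImage θ N z') →
        ((substIter θ N (z 0)).length : ℤ) ≤ C * (t' - t) := by
  have hθ := h.ne_nil
  obtain ⟨C, hC, hrec⟩ := h.exists_linear_recurrence
  refine ⟨C, hC, fun N z z' t t' hz ht heq => ?_⟩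
  by_contra! hlt
  obtain ⟨e, he⟩ := Int.eq_ofNat_of_zero_le (show 0 ≤ t' - t by omega)
  rw [he] at hlt
  have he1 : 1 ≤ e := by omega
  have hper : ∀ x ∈ substShift θ, x e = x 0 := by
    intro x hx
    obtain ⟨o, ho, hoe, e0, e1⟩ := hrec e he1 N z (by exact_mod_cast hlt) x hx
    have h1 := congrFun heq (o - t)
    rw [shiftBy_apply, shiftBy_apply] at h1
    have h2 : levelImage θ N z (o + e) = levelImage θ N z' (o + e) :=
      levelImage_congr hθ N le_rfl zero_le_one
        (fun i hi0 hi1 => by rwa [show i = 0 by omega]) (by rw [levelPos_zero]; omega)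
        (by rw [levelPos_one]; omega)
    rw [e0, e1, h2, show o + (e : ℤ) = o - t + t' by omega, ← h1, sub_add_cancel]
  obtain ⟨x, hx⟩ := h.nonempty_substShift
  refine h.aper x hx e he1 ?_
  rw [iterate_shiftMap]
  funext i
  have := hper _ (shiftBy_mem_substShift hx i)
  rwa [shiftBy_apply, shiftBy_apply, zero_add, add_comm] at this

lemma exists_nested_cut (h : StronglyPrimitive θ d l r) {ω : ℤ → A}
    (hfix : ∀ n, levelImage θ n ω = ω) {m : ℕ} {z : ℤ → A} (hz : z ∈ substShift θ) {s : ℤ}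
    (hs0 : 0 < s) (hs : s < (substIter θ m (z 0)).length) (hω : ω = shiftBy s (levelImage θ m z))
    (k i : ℕ) : ∃ z' ∈ substShift θ, ∃ t : ℤ, 0 ≤ t ∧
      t < (substIter θ (k + (m + i)) (z' 0)).length ∧
      ω = shiftBy t (levelImage θ (k + (m + i)) z') ∧ IsCut θ k (m + i) z' t ∧
        ¬ IsCut θ (k + m) i z' t := by
  have hθ := h.ne_nil
  obtain ⟨z', hz', o, ho0, ho, rfl⟩ := h.exists_eq_shiftBy_levelImage hz i
  set w := levelImage θ i z' with hw
  rw [levelImage_shiftBy hθ, shiftBy_shiftBy] at hω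
  have hlen : (substIter θ m (shiftBy o w 0)).length =
      levelPos θ m w (o + 1) - levelPos θ m w o := by
    rw [levelPos_add_one, shiftBy_apply, zero_add]
    omega
  set v := s + levelPos θ m w o with hv
  have hk := strictMono_levelPos hθ k (levelImage θ m w)
  have h1 : levelPos θ (k + m) w o < levelPos θ k (levelImage θ m w) v := by
    rw [levelPos_add hθ]
    exact hk (by omega)
  have h2 : levelPos θ k (levelImage θ m w) v < levelPos θ (k + m) w (o + 1) := by
    rw [levelPos_add hθ]
    exact hk (by omega)
  have h0 : 0 ≤ levelPos θ (k + m) w o := by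
    simpa using (strictMono_levelPos hθ (k + m) w).monotone ho0
  have h3 : levelPos θ (k + m) w (o + 1) ≤ (substIter θ (k + (m + i)) (z' 0)).length := by
    rw [← levelPos_one, ← add_assoc, levelPos_add hθ (k + m)]
    refine (strictMono_levelPos hθ (k + m) w).monotone ?_
    rw [levelPos_one]
    omega
  refine ⟨z', hz', levelPos θ k (levelImage θ m w) v, by omega, by omega, ?_, ⟨v, ?_⟩, ?_⟩
  · rw [levelImage_add hθ, levelImage_add hθ m, ← levelImage_shiftBy hθ, ← hω, hfix]
  · rw [levelImage_add hθ m]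
  · rintro ⟨c, hc⟩
    rw [hc] at h1 h2
    have h4 := (strictMono_levelPos hθ (k + m) w).lt_iff_lt.1 h1
    have h5 := (strictMono_levelPos hθ (k + m) w).lt_iff_lt.1 h2
    omega

/-- Recognizability at the fixed point. -/
lemma eq_zero_of_eq_shiftBy (h : StronglyPrimitive θ d l r) {ω : ℤ → A}
    (hfix : ∀ n, levelImage θ n ω = ω) {m : ℕ} {z : ℤ → A} (hz : z ∈ substShift θ) {s : ℤ}
    (hs0 : 0 ≤ s) (hs : s < (substIter θ m (z 0)).length)
    (hω : ω = shiftBy s (levelImage θ m z)) : s = 0 := by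
  by_contra hne
  have hθ := h.ne_nil
  cases nonempty_fintype A
  obtain ⟨C, hC, hret⟩ := h.exists_return_bound
  set n := Fintype.card A * C + 1 with hn
  have hex := fun j : Fin n =>
    h.exists_nested_cut hfix hz (by omega) hs hω (j * m) ((n - 1 - j) * m)
  have hnm : ∀ j : Fin n, (j : ℕ) * m + (m + (n - 1 - j) * m) = n * m := by
    intro j
    obtain ⟨i, hi⟩ := Nat.exists_eq_add_of_le (show (j : ℕ) ≤ n - 1 by omega)
    have hi' : n = j + i + 1 := by omega
    calc (j : ℕ) * m + (m + (n - 1 - j) * m) = (j + i + 1) * m := by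
          rw [hi, Nat.add_sub_cancel_left]
          ring
      _ = n * m := by rw [← hi']
  simp only [hnm] at hex
  choose z' hz' t ht0 ht htω hcut hncut using hex
  have hsep : ∀ j j' : Fin n, j < j' → z' j 0 = z' j' 0 → t j ≠ t j' := by
    intro j j' hlt hz0 htt
    obtain ⟨k, hk⟩ := Nat.exists_eq_add_of_le (show (j : ℕ) + 1 ≤ j' from hlt)
    refine hncut j (IsCut.congr hθ hz0.symm (ht0 j) ?_ ?_)
    · rw [← hz0, add_assoc, hnm]
      exact ht j
    · have h1 := hcut j'
      rw [← htt, show (j' : ℕ) * m = (j * m + m) + k * m by rw [hk]; ring] at h1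
      have h2 := h1.mono hθ
      rwa [show k * m + (m + (n - 1 - j') * m) = (n - 1 - j) * m by
        rw [show n - 1 - (j : ℕ) = k + 1 + (n - 1 - j') by omega]
        ring] at h2
  have hlen : ∀ a, (0 : ℤ) < (substIter θ (n * m) a).length := fun a => by
    exact_mod_cast length_substIter_pos hθ _ a
  have hq : ∀ j : Fin n, 0 ≤ C * t j / (substIter θ (n * m) (z' j 0)).length ∧
      C * t j / (substIter θ (n * m) (z' j 0)).length < C := by
    intro j
    refine ⟨Int.ediv_nonneg (mul_nonneg (by omega) (ht0 j)) (by omega), ?_⟩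
    rw [Int.ediv_lt_iff_lt_mul (hlen _)]
    exact mul_lt_mul_of_pos_left (ht j) (by omega)
  let f : Fin n → A × Fin C := fun j =>
    (z' j 0, ⟨(C * t j / (substIter θ (n * m) (z' j 0)).length).toNat, by have := hq j; omega⟩)
  obtain ⟨j, j', hne, hf⟩ := Fintype.exists_ne_map_eq_of_card_lt f (by simp [hn])
  wlog hlt : t j < t j' generalizing j j'
  · refine this j' j hne.symm hf.symm (lt_of_le_of_ne (not_lt.1 hlt) ?_)
    have hz0 : z' j 0 = z' j' 0 := congrArg Prod.fst hf
    rcases lt_or_gt_of_ne hne with hjj | hjj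
    · exact (hsep j j' hjj hz0).symm
    · exact hsep j' j hjj hz0.symm
  have hz0 : z' j 0 = z' j' 0 := congrArg Prod.fst hf
  have hdiv := congrArg (fun a => (a.2 : ℕ)) hf
  simp only [f] at hdiv
  have hb := hret (n * m) (z' j) (z' j') (t j) (t j') hz0 hlt ((htω j).symm.trans (htω j'))
  have h1 := hq j
  have h2 := hq j'
  rw [← hz0] at hdiv h2
  have h3 : C * t j / (substIter θ (n * m) (z' j 0)).length =
      C * t j' / (substIter θ (n * m) (z' j 0)).length := by omega
  have h4 := Int.lt_ediv_add_one_mul_self (C * t j') (hlen (z' j 0))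
  have h5 := Int.ediv_mul_le (C * t j) (hlen (z' j 0)).ne'
  rw [h3] at h5
  linarith [h5, h4, hb]

/-- Near the fixed point the subshift can be desubstituted in only one way. -/
lemma exists_agree_recognizable (h : StronglyPrimitive θ d l r) {ω : ℤ → A}
    (hfix : ∀ n, levelImage θ n ω = ω) (m : ℕ) : ∃ K : ℕ, ∀ z ∈ substShift θ, ∀ s : ℤ, 0 ≤ s →
      s < (substIter θ m (z 0)).length → Agree K (shiftBy s (levelImage θ m z)) ω → s = 0 := by
  have hθ := h.ne_nil
  cases nonempty_fintype A
  let L : ℕ := ∑ a, (substIter θ m a).length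
  have hL : ∀ a, (substIter θ m a).length ≤ L := fun a =>
    Finset.single_le_sum (f := fun a => (substIter θ m a).length) (by simp) (Finset.mem_univ a)
  let R : Set (ℤ → A) := ⋃ s ∈ Finset.Icc 1 L, (fun z => shiftBy (s : ℤ) (levelImage θ m z)) ''
    (substShift θ ∩ {z | s < (substIter θ m (z 0)).length})
  have hR : IsClosed R := by
    refine isClosed_biUnion_finset fun s _ => (IsCompact.image ?_ ?_).isClosed
    · refine ((isClosed_substShift θ).inter ?_).isCompact
      have h0 : Continuous fun z : ℤ → A => z 0 := continuous_apply 0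
      exact (isClosed_discrete {a : A | s < (substIter θ m a).length}).preimage h0
    · exact (continuous_shiftBy _).comp (continuous_levelImage hθ m)
  by_contra! hcon
  have hω : ω ∈ closure R := by
    refine mem_closure_of_agree fun K => ?_
    obtain ⟨z, hz, s, hs0, hs, hag, hne⟩ := hcon K
    refine ⟨_, ?_, hag⟩
    simp only [R, Set.mem_iUnion]
    refine ⟨s.toNat, ?_, z, ⟨hz, ?_⟩, ?_⟩
    · have := hL (z 0)
      rw [Finset.mem_Icc]
      omega
    · rw [Set.mem_ofPred_eq]
      omega
    · simp only [Int.toNat_of_nonneg hs0]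
  rw [hR.closure_eq] at hω
  simp only [R, Set.mem_iUnion, Finset.mem_Icc] at hω
  obtain ⟨s, hs1, z, ⟨hz, hs⟩, e⟩ := hω
  have := h.eq_zero_of_eq_shiftBy hfix hz (Int.natCast_nonneg s) (by exact_mod_cast hs) e.symm
  omega

end StronglyPrimitive

end Recognizability

section Roof

variable {A : Type*}

/-- The place reached from `i` in `x` after one step of the speedup with jump function `p`. -/
def stepPos (p : (ℤ → A) → ℕ) (x : ℤ → A) (i : ℤ) : ℤ := i + p (shiftBy i x)

/-- The place `j` of `x` is reached from the place `i`. -/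
def Conn (p : (ℤ → A) → ℕ) (x : ℤ → A) (i j : ℤ) : Prop := ∃ h : ℕ, (stepPos p x)^[h] i = j

lemma Conn.trans {p : (ℤ → A) → ℕ} {x : ℤ → A} {i j k : ℤ} (h : Conn p x i j)
    (h' : Conn p x j k) : Conn p x i k := by
  obtain ⟨a, rfl⟩ := h
  obtain ⟨b, rfl⟩ := h'
  exact ⟨b + a, Function.iterate_add_apply _ _ _ _⟩

lemma iterate_stepPos_shiftBy (p : (ℤ → A) → ℕ) (x : ℤ → A) (s i : ℤ) (h : ℕ) :
    (stepPos p x)^[h] (i + s) = (stepPos p (shiftBy s x))^[h] i + s := by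
  induction h with
  | zero => rfl
  | succ h ih =>
    rw [Function.iterate_succ_apply', ih, Function.iterate_succ_apply', stepPos, stepPos,
      shiftBy_shiftBy]
    ring

lemma conn_shiftBy_iff {p : (ℤ → A) → ℕ} {x : ℤ → A} {s i j : ℤ} :
    Conn p (shiftBy s x) i j ↔ Conn p x (i + s) (j + s) := by
  simp only [Conn, iterate_stepPos_shiftBy, add_left_inj]

/-- A bounded positive function on sequences depending on `[-ρ, ρ]` only, on the set `X`. -/
structure IsRoof (X : Set (ℤ → A)) (p : (ℤ → A) → ℕ) (M ρ : ℕ) : Prop where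
  pos : ∀ x, 1 ≤ p x
  le : ∀ x, p x ≤ M
  congr : ∀ x ∈ X, ∀ y ∈ X, Agree ρ x y → p x = p y

namespace IsRoof

variable {X : Set (ℤ → A)} {p : (ℤ → A) → ℕ} {M ρ : ℕ}

lemma lt_stepPos (hp : IsRoof X p M ρ) (x : ℤ → A) (i : ℤ) : i < stepPos p x i := by
  have := hp.pos (shiftBy i x)
  rw [stepPos]
  omega

lemma stepPos_le (hp : IsRoof X p M ρ) (x : ℤ → A) (i : ℤ) : stepPos p x i ≤ i + M := by
  have := hp.le (shiftBy i x)
  rw [stepPos]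
  omega

lemma le_iterate_stepPos (hp : IsRoof X p M ρ) (x : ℤ → A) (i : ℤ) (h : ℕ) :
    i + h ≤ (stepPos p x)^[h] i := by
  induction h with
  | zero => simp
  | succ h ih =>
    rw [Function.iterate_succ_apply']
    have := hp.lt_stepPos x ((stepPos p x)^[h] i)
    omega

lemma iterate_stepPos_le (hp : IsRoof X p M ρ) (x : ℤ → A) (i : ℤ) (h : ℕ) :
    (stepPos p x)^[h] i ≤ i + M * h := by
  induction h with
  | zero => simp
  | succ h ih =>
    rw [Function.iterate_succ_apply']
    have := hp.stepPos_le x ((stepPos p x)^[h] i)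
    push_cast
    linarith

lemma strictMono_iterate_stepPos (hp : IsRoof X p M ρ) (x : ℤ → A) (i : ℤ) :
    StrictMono fun h : ℕ => (stepPos p x)^[h] i :=
  strictMono_nat_of_lt_succ fun h => by
    simp only [Function.iterate_succ_apply']
    exact hp.lt_stepPos x _

lemma iterate_stepPos_congr (hp : IsRoof X p M ρ) (hX : ∀ x ∈ X, ∀ k, shiftBy k x ∈ X)
    {x y : ℤ → A} (hx : x ∈ X) (hy : y ∈ X) {i b : ℤ}
    (hxy : ∀ t, i - ρ ≤ t → t < b + ρ → x t = y t) {h : ℕ} (hb : (stepPos p x)^[h] i ≤ b) :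
    (stepPos p x)^[h] i = (stepPos p y)^[h] i := by
  induction h with
  | zero => rfl
  | succ h ih =>
    rw [Function.iterate_succ_apply'] at hb ⊢
    have h1 := hp.lt_stepPos x ((stepPos p x)^[h] i)
    have h2 := hp.le_iterate_stepPos x i h
    rw [Function.iterate_succ_apply', ← ih (by omega), stepPos, stepPos,
      hp.congr _ (hX x hx _) _ (hX y hy _) fun t ht1 ht2 => hxy _ (by omega) (by omega)]

lemma conn_congr (hp : IsRoof X p M ρ) (hX : ∀ x ∈ X, ∀ k, shiftBy k x ∈ X)
    {x y : ℤ → A} (hx : x ∈ X) (hy : y ∈ X) {i j : ℤ}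
    (hxy : ∀ t, i - ρ ≤ t → t < j + ρ → x t = y t) (h : Conn p x i j) : Conn p y i j := by
  obtain ⟨h, rfl⟩ := h
  exact ⟨h, (hp.iterate_stepPos_congr hX hx hy hxy le_rfl).symm⟩

/-- A path cannot jump over an interval of length `M`. -/
lemma exists_conn_between (hp : IsRoof X p M ρ) {x : ℤ → A} {i j c : ℤ} (h : Conn p x i j)
    (hi : i < c) (hj : c ≤ j) : ∃ k, c ≤ k ∧ k < c + M ∧ Conn p x i k ∧ Conn p x k j := by
  obtain ⟨h, rfl⟩ := h
  induction h generalizing i with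
  | zero =>
    rw [Function.iterate_zero_apply] at hj
    omega
  | succ h ih =>
    rw [Function.iterate_succ_apply] at hj ⊢
    have hstep : Conn p x i (stepPos p x i) := ⟨1, rfl⟩
    rcases lt_or_ge (stepPos p x i) c with hc | hc
    · obtain ⟨k, h1, h2, h3, h4⟩ := ih hc hj
      exact ⟨k, h1, h2, hstep.trans h3, h4⟩
    · have := hp.stepPos_le x i
      exact ⟨_, hc, by omega, hstep, h, rfl⟩

end IsRoof

/-- The speedup can pass from the place `i` at the beginning of the image of level `n` of the
letter `a` to the place `j` after its end. -/
def Crossing (θ : A → List A) [Nonempty A] (p : (ℤ → A) → ℕ) (M n : ℕ) (a : A) (i j : Fin M) :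
    Prop :=
  ∃ z ∈ substShift θ, z 0 = a ∧ Conn p (levelImage θ n z) i ((substIter θ n a).length + j)

namespace StronglyPrimitive

variable {θ : A → List A} {d : ℕ} {l r : A} [Nonempty A] {p : (ℤ → A) → ℕ} {M ρ : ℕ}

lemma conn_of_crossing (h : StronglyPrimitive θ d l r) (hp : IsRoof (substShift θ) p M ρ) {k n : ℕ}
    (hn : d ≤ n) (hk : ∀ a, M + ρ ≤ (substIter θ k a).length) {z : ℤ → A} (hz : z ∈ substShift θ)
    {i j : Fin M} (hc : Crossing θ p M (k + n) (z 0) i j) :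
    Conn p (levelImage θ (k + n) z) i (levelPos θ (k + n) z 1 + j) := by
  obtain ⟨y, hy, hyz, hc⟩ := hc
  rw [levelPos_one]
  refine hp.conn_congr (fun x hx => shiftBy_mem_substShift hx)
    (levelImage_mem_substShift h.ne_nil hy _)
    (levelImage_mem_substShift h.ne_nil hz _) (fun t h1 h2 => ?_) hc
  refine h.levelImage_agree_around hn hk zero_le_one
    (fun i hi0 hi1 => by rwa [show i = 0 by omega]) ?_ ?_
  · push_cast
    omega
  · rw [levelPos_one, hyz]
    push_cast
    omega

/-- Levels with the same crossings have the same paths between boundaries of blocks. -/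
lemma conn_of_crossing_eq (h : StronglyPrimitive θ d l r) (hp : IsRoof (substShift θ) p M ρ)
    {n k' n' : ℕ} (hnM : ∀ a, M ≤ (substIter θ n a).length)
    (hn' : d ≤ n') (hk' : ∀ a, M + ρ ≤ (substIter θ k' a).length)
    (hE : ∀ a i j, Crossing θ p M n a i j → Crossing θ p M (k' + n') a i j)
    {z : ℤ → A} (hz : z ∈ substShift θ) (s : ℕ) (i j : Fin M)
    (hc : Conn p (levelImage θ n z) i (levelPos θ n z (s + 1 : ℕ) + j)) :
    Conn p (levelImage θ (k' + n') z) i (levelPos θ (k' + n') z (s + 1 : ℕ) + j) := by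
  have hθ := h.ne_nil
  induction s generalizing j with
  | zero =>
    simp only [zero_add, Nat.cast_one] at hc ⊢
    exact h.conn_of_crossing hp hn' hk' hz (hE _ _ _ ⟨z, hz, rfl, by rwa [levelPos_one] at hc⟩)
  | succ s ih =>
    have e : ((s + 1 + 1 : ℕ) : ℤ) = ((s + 1 : ℕ) : ℤ) + 1 := by push_cast; ring
    rw [e] at hc ⊢
    have h1 : levelPos θ n z 1 ≤ levelPos θ n z (s + 1 : ℕ) :=
      (strictMono_levelPos hθ n z).monotone (by push_cast; omega)
    rw [levelPos_one] at h1
    have h2 := hnM (z 0)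
    rw [levelPos_add_one] at hc
    obtain ⟨k, hk1, hk2, hc1, hc2⟩ :=
      hp.exists_conn_between hc (c := levelPos θ n z (s + 1 : ℕ)) (by omega) (by omega)
    obtain ⟨u, hu⟩ := Int.eq_ofNat_of_zero_le (sub_nonneg.2 hk1)
    obtain rfl : k = levelPos θ n z (s + 1 : ℕ) + u := by omega
    have huM : u < M := by omega
    refine (ih ⟨u, huM⟩ hc1).trans ?_
    have hcross : Crossing θ p M n (z (s + 1 : ℕ)) ⟨u, huM⟩ j := by
      refine ⟨shiftBy (s + 1 : ℕ) z, shiftBy_mem_substShift hz _, ?_, ?_⟩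
      · rw [shiftBy_apply, zero_add]
      · rw [levelImage_shiftBy hθ, conn_shiftBy_iff]
        convert hc2 using 1 <;> ring
    have := h.conn_of_crossing hp hn' hk' (z := shiftBy (s + 1 : ℕ) z) (i := ⟨u, huM⟩) (j := j)
      (shiftBy_mem_substShift hz _) (by
        rw [shiftBy_apply, zero_add]
        exact hE _ _ _ hcross)
    rw [levelImage_shiftBy hθ, conn_shiftBy_iff, levelPos_shiftBy] at this
    convert this using 1
    · ring
    · rw [add_comm (1 : ℤ)]
      ring

variable [Finite A] [TopologicalSpace A] [DiscreteTopology A]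

/-- There is a neighbourhood of the fixed point such that arbitrarily high images map the paths
of the speedup between visits to this neighbourhood to paths of the speedup. -/
lemma exists_conn_levelImage (h : StronglyPrimitive θ d l r) (hp : IsRoof (substShift θ) p M ρ)
    {ω : ℤ → A} (hfix : ∀ n, levelImage θ n ω = ω) :
    ∃ K : ℕ, ∀ Q : ℕ, ∃ q ≥ Q, ∀ x ∈ substShift θ, ∀ k : ℤ, 1 ≤ k → Agree K x ω →
      Agree K (shiftBy k x) ω → Conn p x 0 k → Conn p (levelImage θ q x) 0 (levelPos θ q x k) := by
  have hθ := h.ne_nil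
  have hM : 0 < M := (hp.pos fun _ => l).trans (hp.le _)
  obtain ⟨n₀, hn₀⟩ := h.exists_length_ge (M + ρ)
  obtain ⟨E₀, hE₀⟩ := Finite.exists_infinite_fiber fun n => Crossing θ p M (n₀ + (d + n))
  rw [Set.infinite_coe_iff] at hE₀
  obtain ⟨n₁, hn₁⟩ := hE₀.nonempty
  obtain ⟨K, hK⟩ := h.exists_agree_recognizable hfix (n₀ + (d + n₁))
  refine ⟨K, fun Q => ?_⟩
  obtain ⟨n₂, hn₂, hlt⟩ := hE₀.exists_gt (n₁ + Q)
  obtain ⟨q, rfl⟩ := Nat.exists_eq_add_of_le (show n₁ ≤ n₂ by omega)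
  refine ⟨q, by omega, fun x hx k hk h0 h1 hc => ?_⟩
  have hEE : Crossing θ p M (n₀ + (d + n₁)) = Crossing θ p M (n₀ + (d + (n₁ + q))) :=
    (show _ = E₀ from hn₁).trans (show _ = E₀ from hn₂).symm
  obtain ⟨z, hz, s, hs0, hs, rfl⟩ := h.exists_eq_shiftBy_levelImage hx (n₀ + (d + n₁))
  obtain rfl := hK z hz s hs0 hs h0
  rw [shiftBy_zero] at *
  obtain ⟨v, hv1, hv2⟩ := exists_level_block hθ (n₀ + (d + n₁)) z k
  have hkv : k - levelPos θ (n₀ + (d + n₁)) z v = 0 := by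
    refine hK _ (shiftBy_mem_substShift hz v) _ (by omega) ?_ ?_
    · rw [levelPos_add_one] at hv2
      rw [shiftBy_apply, zero_add]
      omega
    · rwa [levelImage_shiftBy hθ, shiftBy_shiftBy, sub_add_cancel]
  obtain rfl : k = levelPos θ (n₀ + (d + n₁)) z v := by omega
  have hv : 0 < v := by
    rw [← (strictMono_levelPos hθ (n₀ + (d + n₁)) z).lt_iff_lt, levelPos_zero]
    omega
  obtain ⟨u, rfl⟩ : ∃ u : ℕ, v = (u + 1 : ℕ) := ⟨(v - 1).toNat, by omega⟩
  have := h.conn_of_crossing_eq hp (n := n₀ + (d + n₁)) (k' := n₀) (n' := d + (n₁ + q))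
    (fun a => (Nat.le_add_right _ _).trans ((hn₀ n₀ le_rfl a).trans
      (length_substIter_mono hθ (by omega) a))) (by omega) (hn₀ n₀ le_rfl)
    (fun a i j => by rw [hEE]; exact id) hz u ⟨0, hM⟩ ⟨0, hM⟩ (by simpa using hc)
  rw [← levelImage_add hθ, ← levelPos_add hθ,
    show q + (n₀ + (d + n₁)) = n₀ + (d + (n₁ + q)) by omega]
  simpa using this

end StronglyPrimitive

end Roof

section Minimality

variable {Y : Type*} [TopologicalSpace Y] [CompactSpace Y] {S : Equiv.Perm Y}

lemma exists_pow_mem_of_dense (hS : Continuous S) (hS' : Continuous S.symm)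
    (hmin : ∀ x, Dense (Set.range fun n : ℤ => (S ^ n) x)) {V : Set Y} (hV : IsOpen V)
    (hne : V.Nonempty) : ∃ H : ℕ, ∀ x, ∃ n ≤ H, (S ^ n) x ∈ V := by
  obtain ⟨s, hs⟩ := isCompact_univ.elim_finite_subcover (fun n : ℤ => (S ^ n) ⁻¹' V)
    (fun n => hV.preimage (continuous_perm_zpow S hS hS' n)) fun x _ => by
      obtain ⟨_, hy, n, rfl⟩ := (hmin x).inter_open_nonempty V hV hne
      exact Set.mem_iUnion.2 ⟨n, hy⟩
  let N : ℕ := ∑ n ∈ s, n.natAbs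
  refine ⟨2 * N, fun x => ?_⟩
  obtain ⟨n, hn⟩ := Set.mem_iUnion.1 (hs (Set.mem_univ ((S ^ N) x)))
  obtain ⟨hns, hn⟩ := Set.mem_iUnion.1 hn
  have hnN : n.natAbs ≤ N := Finset.single_le_sum (f := Int.natAbs) (by simp) hns
  refine ⟨(n + N).toNat, by omega, ?_⟩
  have e : S ^ (n + N).toNat = S ^ n * S ^ N := by
    rw [← zpow_natCast, Int.toNat_of_nonneg (by omega), zpow_add, zpow_natCast]
  rw [e]
  exact hn

end Minimality

/-- The time elapsed since the last visit to `U`. -/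
noncomputable def lastVisit {Y : Type*} (S : Equiv.Perm Y) (U : Set Y) (x : Y) : ℕ :=
  sInf {j : ℕ | (S ^ (-(j : ℤ))) x ∈ U}

section LastVisit

variable {Y : Type*} {S : Equiv.Perm Y} {U : Set Y} {H : ℕ}

lemma lastVisit_spec (hU : ∀ x, ∃ n ≤ H, (S ^ n) x ∈ U) (x : Y) :
    lastVisit S U x ≤ H ∧ (S ^ (-(lastVisit S U x : ℤ))) x ∈ U := by
  obtain ⟨n, hn, hnU⟩ := hU ((S ^ (-(H : ℤ))) x)
  have hmem : H - n ∈ {j : ℕ | (S ^ (-(j : ℤ))) x ∈ U} := by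
    rw [Set.mem_ofPred_eq, show -((H - n : ℕ) : ℤ) = n + -(H : ℤ) by omega, zpow_add, zpow_natCast]
    exact hnU
  exact ⟨(Nat.sInf_le hmem).trans (by omega), Nat.sInf_mem ⟨_, hmem⟩⟩

lemma lastVisit_of_mem {x : Y} (hx : x ∈ U) : lastVisit S U x = 0 :=
  Nat.sInf_eq_zero.2 (Or.inl (by
    rw [Set.mem_ofPred_eq, Nat.cast_zero, neg_zero, zpow_zero]
    exact hx))

lemma lastVisit_apply_of_notMem (hU : ∀ x, ∃ n ≤ H, (S ^ n) x ∈ U) {x : Y} (hx : S x ∉ U) :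
    lastVisit S U (S x) = lastVisit S U x + 1 := by
  have key : ∀ j : ℕ, (S ^ (-((j + 1 : ℕ) : ℤ))) (S x) = (S ^ (-(j : ℤ))) x := by
    intro j
    rw [← Equiv.Perm.mul_apply, ← zpow_add_one]
    congr 2
    push_cast
    ring
  obtain ⟨-, h1⟩ := lastVisit_spec hU x
  obtain ⟨-, h2⟩ := lastVisit_spec hU (S x)
  apply le_antisymm
  · exact Nat.sInf_le (by rw [Set.mem_ofPred_eq, key]; exact h1)
  · rcases Nat.eq_zero_or_pos (lastVisit S U (S x)) with h0 | h0
    · rw [h0] at h2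
      exact absurd (by simpa using h2) hx
    · obtain ⟨j, hj⟩ := Nat.exists_eq_add_of_le' h0
      rw [hj, key] at h2
      rw [hj]
      exact Nat.succ_le_succ (Nat.sInf_le h2)

lemma lastVisit_congr {x y : Y} (hU : ∀ x, ∃ n ≤ H, (S ^ n) x ∈ U)
    (hxy : ∀ n ≤ H, (S ^ (-(n : ℤ))) x ∈ U ↔ (S ^ (-(n : ℤ))) y ∈ U) :
    lastVisit S U x = lastVisit S U y := by
  have hx := lastVisit_spec hU x
  have hy := lastVisit_spec hU y
  apply le_antisymm
  · exact Nat.sInf_le ((hxy _ hy.1).2 hy.2)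
  · exact Nat.sInf_le ((hxy _ hx.1).1 hx.2)

end LastVisit

section Coding

variable {A : Type*} [TopologicalSpace A] [DiscreteTopology A] [Finite A]

/-- The coding of points by the symbols in `[-K, K]`. -/
lemma exists_windowCode (X : Set (ℤ → A)) (K : ℕ) : ∃ (N : ℕ) (c : X → Fin N), Continuous c ∧
    Function.Surjective c ∧ ∀ x y, c x = c y ↔ Agree K x.1 y.1 := by
  let w : X → Fin (2 * K + 1) → A := fun x i => x.1 (i - K)
  have hw : Continuous w := continuous_pi fun i =>
    (continuous_apply ((i : ℤ) - K)).comp continuous_subtype_val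
  have hwa : ∀ x y, w x = w y ↔ Agree K x.1 y.1 := by
    intro x y
    refine ⟨fun e i h1 h2 => ?_, fun h => funext fun i => h _ (by omega) (by omega)⟩
    have := congrFun e ⟨(i + K).toNat, by omega⟩
    simp only [w] at this
    rwa [show ((i + K).toNat : ℤ) - K = i by omega] at this
  let e := Finite.equivFin (Set.range w)
  refine ⟨_, fun x => e ⟨w x, Set.mem_range_self x⟩, ?_, ?_, fun x y => ?_⟩
  · exact continuous_of_discreteTopology.comp (hw.subtype_mk Set.mem_range_self)
  · intro b
    obtain ⟨⟨_, x, rfl⟩, hx⟩ := e.surjective b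
    exact ⟨x, hx⟩
  · rw [e.apply_eq_iff_eq, ← hwa]
    exact Subtype.ext_iff

lemma exists_agree_map {X : Set (ℤ → A)} [CompactSpace X] {g : X → X} (hg : Continuous g)
    (K : ℕ) : ∃ K', ∀ x y : X, Agree K' x.1 y.1 → Agree K (g x).1 (g y).1 := by
  obtain ⟨N, c, hc, -, hcK⟩ := exists_windowCode X K
  obtain ⟨K', hK'⟩ := exists_window_of_continuous (hc.comp hg)
  exact ⟨K', fun x y hxy => (hcK _ _).1 (hK' x y hxy)⟩

end Coding

section Speedup

variable {A : Type*} {X : Set (ℤ → A)} {p : (ℤ → A) → ℕ} {M ρ : ℕ} {S : Equiv.Perm X}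

lemma coe_pow_apply (hSp : ∀ x, (S x).1 = shiftBy (p x.1) x.1) (n : ℕ) (x : X) :
    ((S ^ n) x).1 = shiftBy ((stepPos p x.1)^[n] 0) x.1 := by
  induction n with
  | zero => rw [Function.iterate_zero_apply, shiftBy_zero, pow_zero, Equiv.Perm.one_apply]
  | succ n ih =>
    rw [pow_succ', Equiv.Perm.mul_apply, hSp, ih, shiftBy_shiftBy, Function.iterate_succ_apply',
      stepPos, add_comm]

lemma iterate_stepPos_eq_of_forall (hSp : ∀ x, (S x).1 = shiftBy (p x.1) x.1) {n : ℕ} {x y : X}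
    (h : ∀ i < n, p ((S ^ i) x).1 = p ((S ^ i) y).1) :
    (stepPos p x.1)^[n] 0 = (stepPos p y.1)^[n] 0 := by
  induction n with
  | zero => rfl
  | succ n ih =>
    have h1 := h n (by omega)
    rw [coe_pow_apply hSp, coe_pow_apply hSp] at h1
    rw [Function.iterate_succ_apply', Function.iterate_succ_apply', stepPos, stepPos, h1,
      ih fun i hi => h i (by omega)]

/-- The symbols in a large window around the origin generate the topology. -/
lemma eq_of_forall_agree (hp : IsRoof X p M ρ) (hSp : ∀ x, (S x).1 = shiftBy (p x.1) x.1) {K : ℕ}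
    (hρ : ρ ≤ K) (hM : M ≤ K) {x y : X} (h : ∀ n : ℤ, Agree K ((S ^ n) x).1 ((S ^ n) y).1) :
    x = y := by
  have hpos : ∀ x y : X, (∀ n : ℕ, Agree K ((S ^ n) x).1 ((S ^ n) y).1) → ∀ n,
      (stepPos p x.1)^[n] 0 = (stepPos p y.1)^[n] 0 := fun x y h n =>
    iterate_stepPos_eq_of_forall hSp fun i _ =>
      hp.congr _ ((S ^ i) x).2 _ ((S ^ i) y).2 ((h i).mono hρ)
  have key : ∀ x y : X, (∀ n : ℕ, Agree K ((S ^ n) x).1 ((S ^ n) y).1) → ∀ n : ℕ, ∀ i : ℤ,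
      -K ≤ i → i ≤ (stepPos p x.1)^[n] 0 + K → x.1 i = y.1 i := by
    intro x y h n
    have hn := hpos x y h
    induction n with
    | zero =>
      intro i h1 h2
      simpa using h 0 i h1 (by simpa using h2)
    | succ n ih =>
      intro i h1 h2
      have h3 := hp.stepPos_le x.1 ((stepPos p x.1)^[n] 0)
      rcases le_or_gt i ((stepPos p x.1)^[n] 0 + K) with h4 | h4
      · exact ih i h1 h4
      · have h5 := h (n + 1) (i - (stepPos p x.1)^[n + 1] 0)
          (by rw [Function.iterate_succ_apply']; omega) (by omega)
        rwa [coe_pow_apply hSp, coe_pow_apply hSp, ← hn, shiftBy_apply, shiftBy_apply,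
          sub_add_cancel] at h5
  apply Subtype.ext
  funext i
  obtain ⟨n, hn⟩ : ∃ n : ℕ, n = i.natAbs := ⟨_, rfl⟩
  have h' : ∀ k : ℕ, Agree K ((S ^ k) ((S ^ (-(n : ℤ))) x)).1 ((S ^ k) ((S ^ (-(n : ℤ))) y)).1 := by
    intro k
    have := h (k + -(n : ℤ))
    rwa [zpow_add, zpow_natCast] at this
  have hback : ∀ x : X, x.1 =
      shiftBy ((stepPos p ((S ^ (-(n : ℤ))) x).1)^[n] 0) ((S ^ (-(n : ℤ))) x).1 := by
    intro x
    rw [← coe_pow_apply hSp, ← zpow_natCast, ← Equiv.Perm.mul_apply, ← zpow_add, add_neg_cancel,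
      zpow_zero, Equiv.Perm.one_apply]
  rw [hback x, hback y, shiftBy_apply, shiftBy_apply, ← hpos _ _ h']
  set k := (stepPos p ((S ^ (-(n : ℤ))) x).1)^[n] 0 with hk
  have hkn := hp.le_iterate_stepPos ((S ^ (-(n : ℤ))) x).1 0 n
  refine key _ _ h' (i + k).toNat _ (by omega) ?_
  have := hp.le_iterate_stepPos ((S ^ (-(n : ℤ))) x).1 0 (i + k).toNat
  omega

end Speedup

section Assembly

variable {A : Type*} [Finite A] [Nonempty A] [TopologicalSpace A] [DiscreteTopology A]
  {θ : A → List A} {d : ℕ} {l r : A} {p : (ℤ → A) → ℕ} {M ρ : ℕ}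

/-- A minimal speedup with a locally constant jump function is a substitution subshift. -/
theorem StronglyPrimitive.exists_substitution (h : StronglyPrimitive θ d l r)
    (hp : IsRoof (substShift θ) p M ρ) {S : Equiv.Perm (substShift θ)} (hS : Continuous S)
    (hS' : Continuous S.symm) (hSp : ∀ x, (S x).1 = shiftBy (p x.1) x.1)
    (hmin : ∀ V : Set (substShift θ), IsOpen V → V.Nonempty →
      ∃ H : ℕ, ∀ x, ∃ n ≤ H, (S ^ n) x ∈ V) :
    ∃ (N : ℕ) (τ : Fin N → List (Fin N)), 0 < N ∧ (∀ b, τ b ≠ []) ∧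
      SubstProper τ ∧ SubstPrimitive τ ∧ SubstAperiodic τ ∧
      ∃ ψ : ↥(substShift θ) ≃ₜ ↥(substShift τ),
        ∀ x : ↥(substShift θ),
          ((ψ (S x) : ↥(substShift τ)) : ℤ → Fin N) =
            shiftMap ((ψ x : ↥(substShift τ)) : ℤ → Fin N) := by
  classical
  have hθ := h.ne_nil
  have hX : ∀ x ∈ substShift θ, ∀ k, shiftBy k x ∈ substShift θ := fun x hx =>
    shiftBy_mem_substShift hx
  obtain ⟨ω, hωX, hfix, hclose⟩ := h.exists_fixedPoint
  let ω' : substShift θ := ⟨ω, hωX⟩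
  have : Nonempty (substShift θ) := ⟨ω'⟩
  have hopen : ∀ K, ∃ V : Set (substShift θ), IsOpen V ∧ ω' ∈ V ∧ ∀ x ∈ V, Agree K x.1 ω := by
    intro K
    have hv : Continuous fun y : substShift θ => y.1 := continuous_subtype_val
    have h1 : ∀ᶠ y : substShift θ in 𝓝 ω', Agree K y.1 ω :=
      (hv.tendsto ω').eventually (eventually_agree K ω)
    obtain ⟨V, hV, hVo, hωV⟩ := eventually_nhds_iff.1 h1
    exact ⟨V, hVo, hωV, hV⟩
  have hhit : ∀ K, ∃ H : ℕ, ∀ x, ∃ n ≤ H, (S ^ n) x ∈ {x : substShift θ | Agree K x.1 ω} := by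
    intro K
    obtain ⟨V, hVo, hωV, hV⟩ := hopen K
    obtain ⟨H, hH⟩ := hmin V hVo ⟨_, hωV⟩
    refine ⟨H, fun x => ?_⟩
    obtain ⟨n, hn, hnV⟩ := hH x
    exact ⟨n, hn, hV _ hnV⟩
  obtain ⟨K, hK⟩ := h.exists_conn_levelImage hp hfix
  let U : Set (substShift θ) := {x | Agree K x.1 ω}
  obtain ⟨J, hJ⟩ : ∃ H : ℕ, ∀ x, ∃ n ≤ H, (S ^ n) x ∈ U := hhit K
  let j := lastVisit S U
  let base : substShift θ → substShift θ := fun x => (S ^ (-(j x : ℤ))) x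
  have hj : ∀ x, j x ≤ J := fun x => (lastVisit_spec hJ x).1
  have hbase : ∀ x, Agree K (base x).1 ω := fun x => (lastVisit_spec hJ x).2
  have hbasepow : ∀ x, (S ^ j x) (base x) = x := fun x => by
    simp only [base]
    rw [← zpow_natCast, ← Equiv.Perm.mul_apply, ← zpow_add, add_neg_cancel, zpow_zero,
      Equiv.Perm.one_apply]
  -- the window of the code
  have hwin : ∀ n : ℕ, ∃ K', ∀ x y : substShift θ, Agree K' x.1 y.1 →
      Agree (K + ρ) ((S ^ (-(n : ℤ))) x).1 ((S ^ (-(n : ℤ))) y).1 := fun n =>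
    exists_agree_map (continuous_perm_zpow S hS hS' _) _
  choose W hW using hwin
  obtain ⟨W', hW'⟩ := exists_agree_map hS K
  set Kb := ρ + M * (J + 1) + ∑ n ∈ Finset.range (J + 1), W n + W' with hKb
  have hMKb : M ≤ Kb := by
    have : M ≤ M * (J + 1) := Nat.le_mul_of_pos_right _ (by omega)
    omega
  obtain ⟨N, c, hc, hsurj, hcK⟩ := exists_windowCode (substShift θ) Kb
  have hWn : ∀ n ≤ J, ∀ x y, c x = c y →
      Agree (K + ρ) ((S ^ (-(n : ℤ))) x).1 ((S ^ (-(n : ℤ))) y).1 := by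
    intro n hn x y hxy
    have h1 : W n ≤ ∑ n ∈ Finset.range (J + 1), W n :=
      Finset.single_le_sum (f := W) (by simp) (Finset.mem_range.2 (by omega))
    exact hW n x y (((hcK x y).1 hxy).mono (by omega))
  have hcj : ∀ x y, c x = c y → j x = j y := by
    intro x y hxy
    refine lastVisit_congr hJ fun n hn => ?_
    have h1 := (hWn n hn x y hxy).mono (show K ≤ K + ρ by omega)
    exact ⟨fun h2 => h1.symm.trans h2, fun h2 => h1.trans h2⟩
  have hcU : ∀ x y, c x = c y → (S x ∈ U ↔ S y ∈ U) := by
    intro x y hxy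
    have h1 := hW' x y (((hcK x y).1 hxy).mono (by omega))
    exact ⟨fun h2 => h1.symm.trans h2, fun h2 => h1.trans h2⟩
  let g : substShift θ → ℤ := fun x => (stepPos p (base x).1)^[j x + 1] 0
  have hg1 : ∀ x, 1 ≤ g x := fun x => by
    have := hp.le_iterate_stepPos (base x).1 0 (j x + 1)
    simp only [g]
    omega
  have hbshift : ∀ x, x.1 = shiftBy ((stepPos p (base x).1)^[j x] 0) (base x).1 := fun x => by
    rw [← coe_pow_apply hSp, hbasepow]
  have hSg : ∀ x, (S x).1 = shiftBy (g x) (base x).1 := fun x => by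
    rw [← coe_pow_apply hSp, pow_succ', Equiv.Perm.mul_apply, hbasepow]
  have hcp : ∀ x y, c x = c y → ∀ n, n ≤ j x + 1 →
      (stepPos p (base x).1)^[n] 0 = (stepPos p (base y).1)^[n] 0 := by
    intro x y hxy n hn
    refine iterate_stepPos_eq_of_forall hSp fun i hi => ?_
    have e : ∀ x, i ≤ j x → (S ^ i) (base x) = (S ^ (-((j x - i : ℕ) : ℤ))) x := fun x hx => by
      simp only [base]
      rw [← zpow_natCast, ← Equiv.Perm.mul_apply, ← zpow_add]
      congr 2
      omega
    have hjx := hj x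
    have hjxy := hcj x y hxy
    rw [e x (by omega), e y (by omega), ← hjxy]
    exact hp.congr _ (Subtype.property _) _ (Subtype.property _)
      ((hWn _ (by omega) x y hxy).mono (by omega))
  have hcg : ∀ x y, c x = c y → g x = g y := fun x y hxy => by
    simp only [g]
    rw [hcp x y hxy _ le_rfl, hcj x y hxy]
  have hcbase : ∀ x y, c x = c y → ∀ i, 0 ≤ i → i < g x → (base x).1 i = (base y).1 i := by
    intro x y hxy i hi0 hig
    have h1 := (hcK x y).1 hxy (i - (stepPos p (base x).1)^[j x] 0)
    have e1 : g x = stepPos p (base x).1 ((stepPos p (base x).1)^[j x] 0) :=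
      Function.iterate_succ_apply' _ _ _
    have h2 := hp.stepPos_le (base x).1 ((stepPos p (base x).1)^[j x] 0)
    have h3 := hp.iterate_stepPos_le (base x).1 0 (j x)
    have h4 : (M : ℤ) * j x ≤ Kb := by
      have : M * j x ≤ M * (J + 1) := Nat.mul_le_mul_left _ ((hj x).trans (by omega))
      have : M * j x ≤ Kb := by omega
      exact_mod_cast this
    have h5 := h1 (by omega) (by omega)
    rw [hbshift x, hbshift y, shiftBy_apply, shiftBy_apply, ← hcj x y hxy,
      ← hcp x y hxy _ (by omega), sub_add_cancel] at h5
    exact h5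
  -- the neighbourhood `V` of the fixed point
  obtain ⟨KV, hKV, hKV'⟩ : ∃ KV, (∀ x : substShift θ, Agree KV x.1 ω → c x = c ω') ∧
      ∀ x : substShift θ, Agree KV x.1 ω → c (S.symm x) = c (S.symm ω') := by
    obtain ⟨K1, hK1⟩ := exists_window_of_continuous hc
    obtain ⟨K2, hK2⟩ := exists_window_of_continuous (hc.comp hS')
    exact ⟨K1 + K2, fun x hx => hK1 x ω' (hx.mono (by omega)),
      fun x hx => hK2 x ω' (hx.mono (by omega))⟩
  obtain ⟨HV, hHV⟩ := hhit KV
  obtain ⟨H, hH2, hH⟩ : ∃ H, 2 ≤ H ∧ ∀ x b, ∃ n < H, c ((S ^ n) x) = b := by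
    have h1 : ∀ b, ∃ H : ℕ, ∀ x, ∃ n ≤ H, (S ^ n) x ∈ c ⁻¹' {b} := fun b =>
      hmin _ ((isOpen_discrete {b}).preimage hc) (hsurj b)
    choose Hb hHb using h1
    refine ⟨∑ b, Hb b + 2, by omega, fun x b => ?_⟩
    obtain ⟨n, hn, hnb⟩ := hHb b x
    have : Hb b ≤ ∑ b, Hb b := Finset.single_le_sum (f := Hb) (by simp) (Finset.mem_univ b)
    exact ⟨n, by omega, hnb⟩
  set D := HV + H with hD
  -- the level
  obtain ⟨k, hk⟩ := h.exists_length_ge (ρ + Kb + KV + M * ((J + 2) * D))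
  obtain ⟨q₀, hq₀⟩ := hclose KV
  obtain ⟨q, hqge, hq⟩ := hK (k + d + q₀)
  obtain ⟨n, rfl⟩ := Nat.exists_eq_add_of_le (show k ≤ q by omega)
  have hlen : ∀ x g, 1 ≤ g → (M * ((J + 2) * D) : ℕ) ≤ levelPos θ (k + n) x g := by
    intro x g hg
    have h1 := (strictMono_levelPos hθ (k + n) x).monotone hg
    have h2 := length_substIter_mono hθ (show k ≤ k + n by omega) (x 0)
    have h3 := hk k le_rfl (x 0)
    rw [levelPos_one] at h1
    omega
  let Θ : substShift θ → substShift θ := fun x =>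
    ⟨levelImage θ (k + n) x.1, levelImage_mem_substShift hθ x.2 _⟩
  have hΘV : ∀ x, Agree KV (Θ x).1 ω := fun x => hq₀ _ (by omega) _
  have hΘag : ∀ (x y : substShift θ) (s : ℤ), 0 ≤ s → (∀ i, 0 ≤ i → i < s → x.1 i = y.1 i) →
      ∀ i, -((ρ + Kb + KV : ℕ) : ℤ) ≤ i → i < levelPos θ (k + n) x.1 s + (ρ + Kb + KV : ℕ) →
        (Θ x).1 i = (Θ y).1 i := fun x y s hs hxy i h1 h2 =>
    h.levelImage_agree_around (show d ≤ n by omega)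
      (fun a => le_trans (by omega) (hk k le_rfl a)) hs hxy h1 h2
  have hΘstep : ∀ (x y : substShift θ) (s : ℤ), 0 ≤ s → (∀ i, 0 ≤ i → i < s → x.1 i = y.1 i) →
      ∀ m, (stepPos p (Θ x).1)^[m] 0 ≤ levelPos θ (k + n) x.1 s →
        (stepPos p (Θ x).1)^[m] 0 = (stepPos p (Θ y).1)^[m] 0 := fun x y s hs hxy m hm =>
    hp.iterate_stepPos_congr hX (Θ x).2 (Θ y).2
      (fun t h1 h2 => hΘag x y s hs hxy t (by push_cast; omega) (by push_cast; omega)) hm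
  have hΘpow : ∀ (x y : substShift θ) (s : ℤ), 0 ≤ s → (∀ i, 0 ≤ i → i < s → x.1 i = y.1 i) →
      ∀ m, (stepPos p (Θ x).1)^[m] 0 < levelPos θ (k + n) x.1 s →
        Agree (Kb + KV) ((S ^ m) (Θ x)).1 ((S ^ m) (Θ y)).1 := by
    intro x y s hs hxy m hm i h1 h2
    have h3 := hp.le_iterate_stepPos (Θ x).1 0 m
    rw [coe_pow_apply hSp, coe_pow_apply hSp, ← hΘstep x y s hs hxy m hm.le, shiftBy_apply,
      shiftBy_apply]
    push_cast at h1 h2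
    exact hΘag x y s hs hxy _ (by push_cast; omega) (by push_cast; omega)
  have hΘω : Θ ω' = ω' := Subtype.ext (hfix _)
  -- the times of visits to `V`
  let e : ℕ → ℕ := fun i => sInf {m | i * D ≤ m ∧ Agree KV ((S ^ m) ω').1 ω}
  have he : ∀ i, i * D ≤ e i ∧ e i ≤ i * D + HV ∧ Agree KV ((S ^ e i) ω').1 ω := by
    intro i
    obtain ⟨m, hm, hmV⟩ := hHV ((S ^ (i * D)) ω')
    have hmem : i * D + m ∈ {m | i * D ≤ m ∧ Agree KV ((S ^ m) ω').1 ω} := by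
      refine ⟨by omega, ?_⟩
      rw [add_comm, pow_add]
      exact hmV
    have h1 := Nat.sInf_mem ⟨_, hmem⟩
    exact ⟨h1.1, (Nat.sInf_le hmem).trans (by omega), h1.2⟩
  have he0 : e 0 = 0 := Nat.sInf_eq_zero.2 (Or.inl ⟨by omega, fun i _ _ => rfl⟩)
  have heJ : ∀ i ≤ J + 1, e i < (J + 2) * D := by
    intro i hi
    have h1 := (he i).2.1
    have h2 : i * D ≤ (J + 1) * D := Nat.mul_le_mul_right _ hi
    have h3 : (J + 2) * D = (J + 1) * D + D := by ring
    omega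
  have hgap : ∀ i, e i + H ≤ e (i + 1) := by
    intro i
    have h1 := (he i).2.1
    have h2 := (he (i + 1)).1
    rw [add_mul, one_mul] at h2
    omega
  have hMpos : 0 < M := (hp.pos ω).trans (hp.le ω)
  have hstepD : ∀ x : substShift θ, ∀ m < (J + 2) * D,
      (stepPos p x.1)^[m] 0 < (M * ((J + 2) * D) : ℕ) := by
    intro x m hm
    have h1 := hp.iterate_stepPos_le x.1 0 m
    have h2 : M * m < M * ((J + 2) * D) := Nat.mul_lt_mul_of_pos_left hm hMpos
    have h3 : (M : ℤ) * m < (M * ((J + 2) * D) : ℕ) := by exact_mod_cast h2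
    omega
  let F : substShift θ → substShift θ := fun x => (S ^ e (j x)) (Θ (base x))
  have hFV : ∀ x, Agree KV (F x).1 ω := by
    intro x
    have hjJ := heJ (j x) (by have := hj x; omega)
    have h1 : Agree (Kb + KV) (F x).1 ((S ^ e (j x)) (Θ ω')).1 :=
      hΘpow (base x) ω' 1 zero_le_one
        (fun i hi0 hi1 => hbase x i (by omega) (by omega)) _
        ((hstepD _ _ hjJ).trans_le (hlen _ 1 le_rfl))
    rw [hΘω] at h1
    exact (h1.mono (by omega)).trans (he (j x)).2.2
  -- the return times
  have hη : ∀ x, ∃ η : ℕ, S x ∈ U →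
      (stepPos p (Θ (base x)).1)^[η] 0 = levelPos θ (k + n) (base x).1 (g x) := by
    intro x
    by_cases hxU : S x ∈ U
    · obtain ⟨η, hη⟩ := hq (base x).1 (base x).2 (g x) (hg1 x) (hbase x)
        (by rw [← hSg]; exact hxU) ⟨j x + 1, rfl⟩
      exact ⟨η, fun _ => hη⟩
    · exact ⟨0, fun hx => absurd hx hxU⟩
  choose η hη using hη
  have hηge : ∀ x, S x ∈ U → (J + 2) * D ≤ η x := by
    intro x hx
    by_contra! hlt
    have h1 := hstepD (Θ (base x)) _ hlt
    rw [hη x hx] at h1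
    exact absurd (hlen (base x).1 (g x) (hg1 x)) (not_le.2 h1)
  let t' : substShift θ → ℕ := fun x => if S x ∈ U then η x else e (j x + 1)
  have ht'le : ∀ x, (stepPos p (Θ (base x)).1)^[t' x] 0 ≤
      levelPos θ (k + n) (base x).1 (g x) := by
    intro x
    by_cases hx : S x ∈ U
    · simp only [t', if_pos hx, hη x hx, le_refl]
    · simp only [t', if_neg hx]
      exact (hstepD _ _ (heJ _ (by have := hj x; omega))).le.trans (hlen _ _ (hg1 x))
  have ht'ge : ∀ x, e (j x) + H ≤ t' x := by
    intro x
    have h1 := hgap (j x)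
    by_cases hx : S x ∈ U
    · have h2 := heJ (j x + 1) (by have := hj x; omega)
      have h3 := hηge x hx
      simp only [t', if_pos hx]
      omega
    · simpa only [t', if_neg hx] using h1
  have hct' : ∀ x y, c x = c y → t' x = t' y := by
    intro x y hxy
    by_cases hx : S x ∈ U
    · have hy := (hcU x y hxy).1 hx
      simp only [t', if_pos hx, if_pos hy]
      have h1 := hΘstep (base x) (base y) (g x) (by have := hg1 x; omega) (hcbase x y hxy) (η x)
        (hη x hx).le
      have h2 : levelPos θ (k + n) (base x).1 (g x) = levelPos θ (k + n) (base y).1 (g x) :=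
        levelPos_congr θ _ le_rfl (by have := hg1 x; omega) (hcbase x y hxy)
          (by have := hg1 x; omega) le_rfl
      rw [hη x hx, h2, hcg x y hxy, ← hη y hy] at h1
      exact ((hp.strictMono_iterate_stepPos _ 0).injective h1).symm
    · have hy := fun hy => hx ((hcU x y hxy).2 hy)
      simp only [t', if_neg hx, if_neg hy, hcj x y hxy]
  have hFpow : ∀ x i, (S ^ i) (F x) = (S ^ (i + e (j x))) (Θ (base x)) := fun x i => by
    rw [pow_add]
    rfl
  refine (exists_substitution_of_coding S hS hS' hmin (fun x m hm hx => ?_) c hc hsurj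
    (fun x y hxy => eq_of_forall_agree hp hSp (show ρ ≤ Kb by omega) hMKb
      fun m => (hcK _ _).1 (hxy m)) F (fun x => t' x - e (j x))
    (fun x => by have := ht'ge x; omega) (fun x => ?_) (fun x y hxy => ⟨?_, fun i hi => ?_⟩)
    (fun x b => ?_) (fun x y => (hKV _ (hFV x)).trans (hKV _ (hFV y)).symm)
    (fun x y => (hKV' _ (hFV x)).trans (hKV' _ (hFV y)).symm)).elim
    fun τ hτ => ⟨N, τ, Fin.pos (c ω'), hτ⟩
  · have h1 := congrArg Subtype.val hx
    rw [coe_pow_apply hSp] at h1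
    have h2 := hp.le_iterate_stepPos x.1 0 m
    refine h.aper x.1 x.2 ((stepPos p x.1)^[m] 0).toNat (by omega) ?_
    rw [iterate_shiftMap, Int.toNat_of_nonneg (by omega), h1]
  · have h1 := ht'ge x
    rw [hFpow, Nat.sub_add_cancel (by omega)]
    by_cases hx : S x ∈ U
    · have hj0 : j (S x) = 0 := lastVisit_of_mem hx
      have hb : base (S x) = S x := by
        simp only [base, hj0, Nat.cast_zero, neg_zero, zpow_zero, Equiv.Perm.one_apply]
      simp only [F, t', if_pos hx, hj0, he0, pow_zero, Equiv.Perm.one_apply, hb]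
      apply Subtype.ext
      rw [coe_pow_apply hSp, hη x hx]
      simp only [Θ]
      rw [← levelImage_shiftBy hθ, hSg]
    · have hj1 : j (S x) = j x + 1 := lastVisit_apply_of_notMem hJ hx
      have hb : base (S x) = base x := by
        simp only [base, hj1]
        rw [← Equiv.Perm.mul_apply, ← zpow_add_one]
        congr 2
        push_cast
        ring
      simp only [F, t', if_neg hx, hj1, hb]
  · simp only [hct' x y hxy, hcj x y hxy]
  · rw [hFpow, hFpow, ← hcj x y hxy, hcK]
    refine (hΘpow (base x) (base y) (g x) (by have := hg1 x; omega) (hcbase x y hxy) _ ?_).mono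
      (show Kb ≤ Kb + KV by omega)
    exact ((hp.strictMono_iterate_stepPos _ 0) (show i + e (j x) < t' x by omega)).trans_le
      (ht'le x)
  · obtain ⟨m, hm, hmb⟩ := hH (F x) b
    have := ht'ge x
    exact ⟨m, by omega, hmb⟩

end Assembly

section JumpFunction

variable {A : Type*} {θ : A → List A} {T : Equiv.Perm (substShift θ)}

lemma coe_shift_pow_apply (hT : ∀ x : substShift θ, (T x : ℤ → A) = shiftMap (x : ℤ → A)) (k : ℕ)
    (x : substShift θ) : ((T ^ k) x : ℤ → A) = shiftBy k x.1 := by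
  induction k with
  | zero => simp [shiftBy_zero]
  | succ k ih =>
    rw [pow_succ', Equiv.Perm.mul_apply, hT, ih, ← iterate_shiftMap, ← iterate_shiftMap,
      Function.iterate_succ_apply']

lemma shiftBy_injective_of_aperiodic (haper : SubstAperiodic θ) {x : ℤ → A}
    (hx : x ∈ substShift θ) {i j : ℕ} (h : shiftBy (i : ℤ) x = shiftBy (j : ℤ) x) : i = j := by
  wlog hij : i < j generalizing i j
  · rcases (not_lt.1 hij).eq_or_lt with e | e
    · exact e.symm
    · exact (this h.symm e).symm
  refine absurd ?_ (haper x hx (j - i) (by omega))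
  rw [iterate_shiftMap]
  have h1 := congrArg (shiftBy (-(i : ℤ))) h
  rw [shiftBy_shiftBy, shiftBy_shiftBy, neg_add_cancel, shiftBy_zero] at h1
  rw [show ((j - i : ℕ) : ℤ) = -(i : ℤ) + j by omega]
  exact h1.symm

/-- The jump function of a bounded speedup is continuous. -/
lemma continuous_jump [TopologicalSpace A] [DiscreteTopology A] (haper : SubstAperiodic θ)
    (hT : ∀ x : substShift θ, (T x : ℤ → A) = shiftMap (x : ℤ → A)) {p : substShift θ → ℕ} {M : ℕ}
    (hM : ∀ x, p x ≤ M) {S : Equiv.Perm (substShift θ)} (hS : Continuous S)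
    (hSp : ∀ x, S x = (T ^ p x) x) : Continuous p := by
  have hclosed : ∀ i, IsClosed (p ⁻¹' {i}) := by
    intro i
    have e : p ⁻¹' {i} = {x | (S x).1 = shiftBy (i : ℤ) x.1} := by
      ext x
      rw [Set.mem_ofPred_eq, hSp, coe_shift_pow_apply hT]
      exact ⟨fun h => by rw [show p x = i from h],
        fun h => shiftBy_injective_of_aperiodic haper x.2 h⟩
    rw [e]
    exact isClosed_eq (continuous_subtype_val.comp hS)
      ((continuous_shiftBy _).comp continuous_subtype_val)
  refine continuous_discrete_rng.2 fun i => ?_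
  have e : p ⁻¹' {i} = (⋃ k ∈ (Finset.range (M + 1)).erase i, p ⁻¹' {k})ᶜ := by
    ext x
    simp only [Set.mem_preimage, Set.mem_singleton_iff, Set.mem_compl_iff, Set.mem_iUnion,
      Finset.mem_erase, Finset.mem_range, exists_prop]
    have := hM x
    constructor
    · rintro h ⟨k, hk, hk'⟩
      omega
    · intro h
      by_contra hne
      exact h ⟨p x, ⟨hne, by omega⟩, rfl⟩
  rw [e]
  exact (isClosed_biUnion_finset fun k _ => hclosed k).isOpen_compl

end JumpFunction

/-- A minimal bounded speedup `S` of a proper, primitive, aperiodic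
substitution subshift `(X^θ, T)` is topologically conjugate to a substitution subshift:
there are a finite alphabet (taken to be `Fin N`), a proper, primitive, aperiodic
substitution `τ` on it, and a homeomorphism `ψ` from `X^θ` to `X^τ` intertwining `S`
with the shift on `X^τ`. -/
theorem boundedSpeedup_of_substitution_is_substitution
    {A : Type*} [Fintype A] [Nonempty A] [TopologicalSpace A] [DiscreteTopology A]
    (θ : A → List A) (hθne : ∀ a, θ a ≠ [])
    (hproper : SubstProper θ) (hprim : SubstPrimitive θ) (haper : SubstAperiodic θ)
    (T : Equiv.Perm ↥(substShift θ))
    (hT : ∀ x : ↥(substShift θ), ((T x : ℤ → A)) = shiftMap (x : ℤ → A))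
    (p : ↥(substShift θ) → ℕ) (hp1 : ∀ x, 1 ≤ p x) (hpbdd : ∃ M : ℕ, ∀ x, p x ≤ M)
    (S : Equiv.Perm ↥(substShift θ)) (hSc : Continuous S) (hSc' : Continuous S.symm)
    (hSp : ∀ x, S x = (T ^ p x) x)
    (hSmin : ∀ x : ↥(substShift θ), Dense (Set.range fun n : ℤ => (S ^ n) x)) :
    ∃ (N : ℕ) (τ : Fin N → List (Fin N)), 0 < N ∧ (∀ b, τ b ≠ []) ∧
      SubstProper τ ∧ SubstPrimitive τ ∧ SubstAperiodic τ ∧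
      ∃ ψ : ↥(substShift θ) ≃ₜ ↥(substShift τ),
        ∀ x : ↥(substShift θ),
          ((ψ (S x) : ↥(substShift τ)) : ℤ → Fin N) =
            shiftMap ((ψ x : ↥(substShift τ)) : ℤ → Fin N) := by
  classical
  obtain ⟨M, hM⟩ := hpbdd
  obtain ⟨d, l, r, h⟩ := exists_stronglyPrimitive hθne hproper hprim haper
  obtain ⟨x₀, hx₀⟩ := h.nonempty_substShift
  obtain ⟨ρ, hρ⟩ := exists_window_of_continuous (continuous_jump haper hT hM hSc hSp)
  let p' : (ℤ → A) → ℕ := fun x => if hx : x ∈ substShift θ then p ⟨x, hx⟩ else 1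
  have hp' : ∀ x : substShift θ, p' x.1 = p x := fun x => dif_pos x.2
  have hp'one : ∀ x ∉ substShift θ, p' x = 1 := fun x hx => dif_neg hx
  have hroof : IsRoof (substShift θ) p' M ρ := by
    refine ⟨fun x => ?_, fun x => ?_, fun x hx y hy hxy => ?_⟩
    · by_cases hx : x ∈ substShift θ
      · exact (hp1 ⟨x, hx⟩).trans (hp' ⟨x, hx⟩).ge
      · exact (hp'one x hx).ge
    · by_cases hx : x ∈ substShift θ
      · exact (hp' ⟨x, hx⟩).le.trans (hM _)
      · exact (hp'one x hx).le.trans ((hp1 ⟨x₀, hx₀⟩).trans (hM _))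
    · exact (hp' ⟨x, hx⟩).trans ((hρ ⟨x, hx⟩ ⟨y, hy⟩ hxy).trans (hp' ⟨y, hy⟩).symm)
  exact h.exists_substitution hroof hSc hSc'
    (fun x => by rw [hp', hSp, coe_shift_pow_apply hT])
    fun V hV hne => exists_pow_mem_of_dense hSc hSc' hSmin hV hne
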